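/- arXiv:0706.3669 — 4 statements merged into one kernel-verified Lean document; each statement's English description precedes it below -/
import Mathlib

section
/- Let n ≥ 2 be an integer, λ ∈ ℝ, and l(λ) = √(max(((n−1)/2)² − λ, 0)). Suppose l ∈ ℝ satisfies either (l < min(1/2, l(λ)) and l ≠ −l(λ)) or l > max(1/2, l(λ)). Then there exists C > 0 such that for every smooth compactly supported v : (0,∞) × ℝ^{n−1} → ℂ, ∫∫ x^{−2l−n} (|v|² + |x ∂ₓ v|² + x² |∇_y v|²) dx dy ≤ C ∫∫ x^{−2l−n} |P v|² dx dy. -/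
open MeasureTheory

/-- `∂ₓ` on functions of `(x, y) ∈ ℝ × ℝ^m`. -/
noncomputable def pderivX {m : ℕ} (v : ℝ × (Fin m → ℝ) → ℂ) (p : ℝ × (Fin m → ℝ)) : ℂ :=
  fderiv ℝ v p (1, 0)

/-- `∂_{yⱼ}` on functions of `(x, y) ∈ ℝ × ℝ^m`. -/
noncomputable def pderivY {m : ℕ} (j : Fin m) (v : ℝ × (Fin m → ℝ) → ℂ)
    (p : ℝ × (Fin m → ℝ)) : ℂ :=
  fderiv ℝ v p (0, Pi.single j 1)

/-- The boundary Laplacian `Δ_y = Σⱼ ∂²/∂yⱼ²`. -/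
noncomputable def lapY {m : ℕ} (v : ℝ × (Fin m → ℝ) → ℂ) (p : ℝ × (Fin m → ℝ)) : ℂ :=
  ∑ j, pderivY j (pderivY j v) p

/-- The model Klein–Gordon operator
`P v = −(x∂ₓ)² v + (n−1) x∂ₓ v + x² Δ_y v − λ v` on `(0,∞) × ℝ^{n−1}`. -/
noncomputable def Pmodel (n : ℕ) (lam : ℂ) (v : ℝ × (Fin (n - 1) → ℝ) → ℂ)
    (p : ℝ × (Fin (n - 1) → ℝ)) : ℂ :=
  -((p.1 : ℂ) * pderivX (fun q => (q.1 : ℂ) * pderivX v q) p)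
    + ((n : ℂ) - 1) * ((p.1 : ℂ) * pderivX v p)
    + (p.1 : ℂ) ^ 2 * lapY v p
    - lam * v p

/-!
In `L²(x ^ (-2l - n) dx dy)` the operator `x∂ₓ` is the sum of the constant `l + (n - 1) / 2` and a
skew-adjoint operator `Z`. With `Yⱼ = x∂_{yⱼ}`, also skew-adjoint, and `κ = ((n - 1) / 2)² - λ`,
one has `P = -(Z + l)² + ∑ⱼ Yⱼ² + κ` and `[Z, Yⱼ] = Yⱼ`.
Pairing `P v` with the multiplier `a Z v + c v`, the commutator turns `⟨Z v, Yⱼ² v⟩` into `‖Yⱼ v‖²`: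
`⟨a Z v + c v, P v⟩ = (c - 2la) ‖Z v‖² + (a - c) ∑ⱼ ‖Yⱼ v‖² + c (κ - l²) ‖v‖²`.
The condition on `l` is what allows `a` and `c` to be chosen with all three coefficients positive,
and Cauchy–Schwarz then gives the estimate.
-/

section AbstractEstimate

variable {D ι : Type*} [AddCommGroup D] [Module ℝ D] [Fintype ι]
  {B : LinearMap.BilinForm ℝ D} {Z : Module.End ℝ D} {Y : ι → Module.End ℝ D}

/-- The abstract Klein–Gordon operator `-X² + (ν - 1) X + ∑ⱼ Yⱼ² - λ`. The model operator is the
case `X = x∂ₓ`, `Yⱼ = x∂_{yⱼ}`; the real parameter `ν` plays the role of the dimension. -/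
def kleinGordon (X : Module.End ℝ D) (Y : ι → Module.End ℝ D) (ν lam : ℝ) : Module.End ℝ D :=
  -X ^ 2 + (ν - 1) • X + ∑ j, Y j ^ 2 - lam • 1

/-- The Klein–Gordon operator written in terms of the skew-adjoint part `Z` of `X` with respect to
the weight `l`: it has no first-order term besides the one in `(Z + l)²`. -/
def shiftedKleinGordon (Z : Module.End ℝ D) (Y : ι → Module.End ℝ D) (l κ : ℝ) :
    Module.End ℝ D :=
  -(Z + l • 1) ^ 2 + ∑ j, Y j ^ 2 + κ • 1

/-- The squared first-order Sobolev norm defined by a form `B` and the operators `X`, `Yⱼ`. -/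
def sobolevEnergy (B : LinearMap.BilinForm ℝ D) (X : Module.End ℝ D) (Y : ι → Module.End ℝ D)
    (v : D) : ℝ :=
  B v v + B (X v) (X v) + ∑ j, B (Y j v) (Y j v)

theorem kleinGordon_eq_shiftedKleinGordon (X : Module.End ℝ D) (Y : ι → Module.End ℝ D)
    (ν lam l : ℝ) :
    kleinGordon X Y ν lam =
      shiftedKleinGordon (X - (l + (ν - 1) / 2) • 1) Y l (((ν - 1) / 2) ^ 2 - lam) := by
  simp only [kleinGordon, shiftedKleinGordon, sq, sub_mul, mul_sub, add_mul, mul_add,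
    smul_mul_assoc, mul_smul_comm, one_mul, mul_one]
  module

theorem apply_self_of_isSkewAdjoint (hB : B.IsSymm) (hZ : B.IsSkewAdjoint Z) (v : D) :
    B v (Z v) = 0 := by
  have h : B (Z v) v = B v (-Z v) := hZ v v
  rw [map_neg, hB.eq] at h
  linarith

theorem apply_sq_of_lie_eq_self {W : Module.End ℝ D} (hB : B.IsSymm) (hZ : B.IsSkewAdjoint Z)
    (hW : B.IsSkewAdjoint W) (hZW : ⁅Z, W⁆ = W) (v : D) :
    B (Z v) ((W ^ 2) v) = B (W v) (W v) := by
  have hcomm : W (Z v) = Z (W v) - W v :=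
    eq_sub_of_add_eq' (sub_eq_iff_eq_add.mp (LinearMap.congr_fun hZW v)).symm
  calc B (Z v) ((W ^ 2) v) = -B (W (Z v)) (W v) := by
        rw [hW (Z v) (W v), sq, Module.End.mul_apply, Pi.neg_apply, map_neg, neg_neg]
    _ = B (W v) (W v) := by
        rw [hcomm, map_sub, LinearMap.sub_apply, hB.eq (Z (W v)), apply_self_of_isSkewAdjoint hB hZ]
        ring

theorem shiftedKleinGordon_apply (Z : Module.End ℝ D) (Y : ι → Module.End ℝ D) (l κ : ℝ) (v : D) :
    shiftedKleinGordon Z Y l κ v =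
      -Z (Z v) - (2 * l) • Z v + (κ - l ^ 2) • v + ∑ j, (Y j ^ 2) v := by
  simp only [shiftedKleinGordon, LinearMap.add_apply, LinearMap.neg_apply, LinearMap.smul_apply,
    LinearMap.sum_apply, Module.End.one_apply, sq, Module.End.mul_apply, map_add, map_smul]
  module

theorem apply_shiftedKleinGordon (hB : B.IsSymm) (hZ : B.IsSkewAdjoint Z)
    (hY : ∀ j, B.IsSkewAdjoint (Y j)) (l κ : ℝ) (v : D) :
    B v (shiftedKleinGordon Z Y l κ v) =
      B (Z v) (Z v) - ∑ j, B (Y j v) (Y j v) + (κ - l ^ 2) * B v v := by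
  have hZZ : B v (Z (Z v)) = -B (Z v) (Z v) := by simp [hZ v (Z v)]
  have hYY (j : ι) : B v ((Y j ^ 2) v) = -B (Y j v) (Y j v) := by simp [hY j v (Y j v), sq]
  simp only [shiftedKleinGordon_apply, map_add, map_sub, map_neg, map_smul, map_sum, smul_eq_mul,
    apply_self_of_isSkewAdjoint hB hZ, hZZ, hYY, Finset.sum_neg_distrib]
  ring

theorem apply_skewAdjoint_shiftedKleinGordon (hB : B.IsSymm) (hZ : B.IsSkewAdjoint Z)
    (hY : ∀ j, B.IsSkewAdjoint (Y j)) (hZY : ∀ j, ⁅Z, Y j⁆ = Y j) (l κ : ℝ) (v : D) :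
    B (Z v) (shiftedKleinGordon Z Y l κ v) =
      -2 * l * B (Z v) (Z v) + ∑ j, B (Y j v) (Y j v) := by
  have hZv : B (Z v) v = 0 := (hB.eq v (Z v)).symm.trans (apply_self_of_isSkewAdjoint hB hZ v)
  simp only [shiftedKleinGordon_apply, map_add, map_sub, map_neg, map_smul, map_sum, smul_eq_mul,
    hZv, apply_self_of_isSkewAdjoint hB hZ, apply_sq_of_lie_eq_self hB hZ (hY _) (hZY _)]
  ring

theorem sobolevEnergy_nonneg (hB : B.IsPosSemidef) (X : Module.End ℝ D) (Y : ι → Module.End ℝ D)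
    (v : D) : 0 ≤ sobolevEnergy B X Y v :=
  add_nonneg (add_nonneg (hB.nonneg _) (hB.nonneg _)) (Finset.sum_nonneg fun _ _ => hB.nonneg _)

theorem apply_add_self_le (hB : B.IsPosSemidef) (u w : D) :
    B (u + w) (u + w) ≤ 2 * (B u u + B w w) := by
  have h := hB.nonneg (u - w)
  simp only [map_add, map_sub, LinearMap.add_apply, LinearMap.sub_apply] at h ⊢
  linarith

theorem apply_smul_add_smul_self_le (hB : B.IsPosSemidef) (X : Module.End ℝ D)
    (Y : ι → Module.End ℝ D) (a c : ℝ) (v : D) :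
    B (a • X v + c • v) (a • X v + c • v) ≤ 2 * (a ^ 2 + c ^ 2) * sobolevEnergy B X Y v := by
  have hY : 0 ≤ ∑ j, B (Y j v) (Y j v) := Finset.sum_nonneg fun _ _ => hB.nonneg _
  have hv : B v v ≤ sobolevEnergy B X Y v := by
    rw [sobolevEnergy]; linarith [hB.nonneg (X v)]
  have hX : B (X v) (X v) ≤ sobolevEnergy B X Y v := by
    rw [sobolevEnergy]; linarith [hB.nonneg v]
  calc B (a • X v + c • v) (a • X v + c • v)
      ≤ 2 * (B (a • X v) (a • X v) + B (c • v) (c • v)) := apply_add_self_le hB _ _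
    _ = 2 * (a ^ 2 * B (X v) (X v) + c ^ 2 * B v v) := by
        simp only [map_smul, LinearMap.smul_apply, smul_eq_mul]; ring
    _ ≤ 2 * (a ^ 2 * sobolevEnergy B X Y v + c ^ 2 * sobolevEnergy B X Y v) := by gcongr
    _ = 2 * (a ^ 2 + c ^ 2) * sobolevEnergy B X Y v := by ring

theorem sobolevEnergy_add_smul_one_le (hB : B.IsPosSemidef) (Z : Module.End ℝ D)
    (Y : ι → Module.End ℝ D) (t : ℝ) (v : D) :
    sobolevEnergy B (Z + t • 1) Y v ≤ (3 + 2 * t ^ 2) * sobolevEnergy B Z Y v := by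
  have h := apply_smul_add_smul_self_le hB Z Y 1 t v
  have hZ := hB.nonneg (Z v)
  rw [one_smul] at h
  calc sobolevEnergy B (Z + t • 1) Y v
      = B v v + B (Z v + t • v) (Z v + t • v) + ∑ j, B (Y j v) (Y j v) := rfl
    _ ≤ sobolevEnergy B Z Y v + 2 * (1 ^ 2 + t ^ 2) * sobolevEnergy B Z Y v := by
        rw [sobolevEnergy] at h ⊢; linarith
    _ = (3 + 2 * t ^ 2) * sobolevEnergy B Z Y v := by ring

theorem le_div_sq_mul_of_mul_le_of_sq_le {δ M b E W F : ℝ} (hδ : 0 < δ) (hM : 0 ≤ M)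
    (hE : 0 ≤ E) (hF : 0 ≤ F) (hEb : δ * E ≤ b) (hb : b ^ 2 ≤ W * F) (hW : W ≤ M * E) :
    E ≤ M / δ ^ 2 * F := by
  obtain rfl | hE' := hE.eq_or_lt
  · positivity
  rw [div_mul_eq_mul_div, le_div_iff₀ (by positivity)]
  refine le_of_mul_le_mul_right ?_ hE'
  calc E * δ ^ 2 * E = (δ * E) ^ 2 := by ring
    _ ≤ b ^ 2 := by gcongr
    _ ≤ W * F := hb
    _ ≤ M * E * F := by gcongr
    _ = M * F * E := by ring

theorem mul_sobolevEnergy_le_apply_shiftedKleinGordon (hB : B.IsPosSemidef) (hZ : B.IsSkewAdjoint Z)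
    (hY : ∀ j, B.IsSkewAdjoint (Y j)) (hZY : ∀ j, ⁅Z, Y j⁆ = Y j) {a c l κ δ : ℝ}
    (hδZ : δ ≤ c - 2 * l * a) (hδY : δ ≤ a - c) (hδ : δ ≤ c * (κ - l ^ 2)) (v : D) :
    δ * sobolevEnergy B Z Y v ≤ B (a • Z v + c • v) (shiftedKleinGordon Z Y l κ v) := by
  have hsum : 0 ≤ ∑ j, B (Y j v) (Y j v) := Finset.sum_nonneg fun _ _ => hB.nonneg _
  calc δ * sobolevEnergy B Z Y v
      = δ * B v v + δ * B (Z v) (Z v) + δ * ∑ j, B (Y j v) (Y j v) := by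
        rw [sobolevEnergy]; ring
    _ ≤ c * (κ - l ^ 2) * B v v + (c - 2 * l * a) * B (Z v) (Z v)
          + (a - c) * ∑ j, B (Y j v) (Y j v) := by
        gcongr <;> exact hB.nonneg _
    _ = B (a • Z v + c • v) (shiftedKleinGordon Z Y l κ v) := by
        rw [map_add, map_smul, map_smul, LinearMap.add_apply, LinearMap.smul_apply,
          LinearMap.smul_apply, smul_eq_mul, smul_eq_mul, apply_shiftedKleinGordon hB.isSymm hZ hY,
          apply_skewAdjoint_shiftedKleinGordon hB.isSymm hZ hY hZY]
        ring

theorem exists_sobolevEnergy_le_shiftedKleinGordon (hB : B.IsPosSemidef) (hZ : B.IsSkewAdjoint Z)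
    (hY : ∀ j, B.IsSkewAdjoint (Y j)) (hZY : ∀ j, ⁅Z, Y j⁆ = Y j) {a c l κ : ℝ}
    (hZpos : 2 * l * a < c) (hYpos : c < a) (hpos : 0 < c * (κ - l ^ 2)) :
    ∃ C : ℝ, 0 < C ∧ ∀ v, sobolevEnergy B Z Y v ≤
      C * B (shiftedKleinGordon Z Y l κ v) (shiftedKleinGordon Z Y l κ v) := by
  set δ := min (c - 2 * l * a) (min (a - c) (c * (κ - l ^ 2)))
  have hδ : 0 < δ := lt_min (sub_pos.2 hZpos) (lt_min (sub_pos.2 hYpos) hpos)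
  have hc : c ≠ 0 := left_ne_zero_of_mul hpos.ne'
  refine ⟨2 * (a ^ 2 + c ^ 2) / δ ^ 2, by positivity, fun v => ?_⟩
  exact le_div_sq_mul_of_mul_le_of_sq_le hδ (by positivity) (sobolevEnergy_nonneg hB Z Y v)
    (hB.nonneg _)
    (mul_sobolevEnergy_le_apply_shiftedKleinGordon hB hZ hY hZY (min_le_left _ _)
      ((min_le_right _ _).trans (min_le_left _ _))
      ((min_le_right _ _).trans (min_le_right _ _)) v)
    (B.apply_sq_le_of_symm hB.nonneg (LinearMap.BilinForm.isSymm_iff.1 hB.isSymm) _ _)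
    (apply_smul_add_smul_self_le hB Z Y a c v)

theorem exists_multiplier_coeffs {κ lκ l : ℝ} (hlκ : lκ = Real.sqrt (max κ 0))
    (hl : (l < min (1 / 2) lκ ∧ l ≠ -lκ) ∨ max (1 / 2) lκ < l) :
    ∃ a c : ℝ, 2 * l * a < c ∧ c < a ∧ 0 < c * (κ - l ^ 2) := by
  have hlκ_nonneg : 0 ≤ lκ := hlκ ▸ Real.sqrt_nonneg _
  have hsq : lκ ^ 2 = max κ 0 := by rw [hlκ, Real.sq_sqrt (le_max_right _ _)]
  have hκ : κ ≤ lκ ^ 2 := hsq ▸ le_max_left _ _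
  rcases hl with ⟨hl, hne⟩ | hl
  · obtain ⟨hl_half, hl_lt⟩ := lt_min_iff.1 hl
    rcases hne.lt_or_gt with hneg | hgt
    · exact ⟨1, l, by linarith, by linarith, mul_pos_of_neg_of_neg (by linarith) (by nlinarith)⟩
    · have hκ_eq : κ = lκ ^ 2 := by
        rcases max_choice κ 0 with h | h <;> rw [h] at hsq
        · exact hsq.symm
        · nlinarith
      obtain ⟨c, hc, hc_lt⟩ := exists_between (max_lt (by linarith : 2 * l < 1) one_pos)
      obtain ⟨hc_l, hc_pos⟩ := max_lt_iff.1 hc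
      exact ⟨1, c, by linarith, hc_lt, mul_pos hc_pos (by nlinarith)⟩
  · obtain ⟨hl_half, hl_gt⟩ := max_lt_iff.1 hl
    obtain ⟨c, hc, hc_lt⟩ := exists_between (by linarith : -2 * l < -1)
    exact ⟨-1, c, by linarith, hc_lt, mul_pos_of_neg_of_neg (by linarith) (by nlinarith)⟩

theorem exists_sobolevEnergy_le_kleinGordon {X : Module.End ℝ D} {ν lam lκ l : ℝ}
    (hB : B.IsPosSemidef) (hX : B.IsSkewAdjoint (X - (l + (ν - 1) / 2) • 1 : Module.End ℝ D))
    (hY : ∀ j, B.IsSkewAdjoint (Y j)) (hXY : ∀ j, ⁅X, Y j⁆ = Y j)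
    (hlκ : lκ = Real.sqrt (max (((ν - 1) / 2) ^ 2 - lam) 0))
    (hl : (l < min (1 / 2) lκ ∧ l ≠ -lκ) ∨ max (1 / 2) lκ < l) :
    ∃ C : ℝ, 0 < C ∧ ∀ v, sobolevEnergy B X Y v ≤
      C * B (kleinGordon X Y ν lam v) (kleinGordon X Y ν lam v) := by
  set t := l + (ν - 1) / 2
  have hlie (j : ι) : ⁅X - t • 1, Y j⁆ = Y j := by
    simpa [Ring.lie_def, sub_mul, mul_sub] using hXY j
  obtain ⟨a, c, hZpos, hYpos, hpos⟩ := exists_multiplier_coeffs hlκ hl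
  obtain ⟨C, hC, hle⟩ := exists_sobolevEnergy_le_shiftedKleinGordon hB hX hY hlie hZpos hYpos hpos
  refine ⟨(3 + 2 * t ^ 2) * C, by positivity, fun v => ?_⟩
  have hshift := sobolevEnergy_add_smul_one_le hB (X - t • 1) Y t v
  rw [sub_add_cancel] at hshift
  rw [kleinGordon_eq_shiftedKleinGordon X Y ν lam l, mul_assoc]
  exact hshift.trans (by gcongr; exact hle v)

end AbstractEstimate

section TestFunctions

open TopologicalSpace
open scoped Distributions LineDeriv InnerProductSpace

variable {E F : Type*} [NormedAddCommGroup E] [NormedSpace ℝ E] {Ω : Opens E}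

section NormedTarget

variable [NormedAddCommGroup F] [NormedSpace ℝ F]

theorem testFunction_eq_zero_of_notMem (f : 𝓓(Ω, F)) {p : E} (hp : p ∉ Ω) : f p = 0 :=
  image_eq_zero_of_notMem_tsupport fun h => hp (f.tsupport_subset h)

theorem testFunction_ext_on {f g : 𝓓(Ω, F)} (h : ∀ p ∈ Ω, f p = g p) : f = g := by
  ext p
  by_cases hp : p ∈ Ω
  · exact h p hp
  · rw [testFunction_eq_zero_of_notMem f hp, testFunction_eq_zero_of_notMem g hp]

theorem testFunction_differentiable (f : 𝓓(Ω, F)) : Differentiable ℝ f :=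
  f.contDiff.differentiable (by simp)

theorem lineDerivOp_testFunction_apply (e : E) (f : 𝓓(Ω, F)) (p : E) :
    (∂_{e} f) p = fderiv ℝ f p e := by
  rw [← (testFunction_differentiable f p).lineDeriv_eq_fderiv]
  exact TestFunction.lineDerivCLM_apply_of_le (𝕜 := ℝ) le_rfl

theorem lineDerivOp_testFunction_comm (e e' : E) (f : 𝓓(Ω, F)) :
    ∂_{e} (∂_{e'} f) = ∂_{e'} (∂_{e} f) := by
  have hsecond (a b p : E) : (∂_{a} (∂_{b} f)) p = fderiv ℝ (fderiv ℝ f) p a b := by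
    have hdiff : DifferentiableAt ℝ (fderiv ℝ f) p :=
      (f.contDiff.fderiv_right (m := 1) (by norm_cast)).differentiable one_ne_zero p
    rw [lineDerivOp_testFunction_apply, funext (lineDerivOp_testFunction_apply b f),
      fderiv_clm_apply hdiff (differentiableAt_const b)]
    simp
  ext p
  have hsymm : IsSymmSndFDerivAt ℝ f p :=
    f.contDiff.contDiffAt.isSymmSndFDerivAt
      (by simp only [minSmoothness_of_isRCLikeNormedField]; norm_cast)
  rw [hsecond, hsecond, hsymm e e']

/-- Multiplication of test functions on `Ω` by a function smooth on `Ω`. -/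
def smoothSMul (φ : E → ℝ) (hφ : ContDiffOn ℝ (⊤ : ℕ∞) φ Ω) : Module.End ℝ 𝓓(Ω, F) where
  toFun f :=
    { toFun := fun p => φ p • f p
      contDiff' := (contMDiff_of_tsupport fun _ hp =>
        ((hφ.contDiffAt (Ω.isOpen.mem_nhds (f.tsupport_subset
          (tsupport_smul_subset_right φ f hp)))).smul f.contDiff.contDiffAt).contMDiffAt).contDiff
      hasCompactSupport' := f.hasCompactSupport.smul_left
      tsupport_subset' := (tsupport_smul_subset_right φ f).trans f.tsupport_subset }
  map_add' f g := TestFunction.ext fun p => smul_add (φ p) (f p) (g p)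
  map_smul' c f := TestFunction.ext fun p => smul_comm (φ p) c (f p)

@[simp]
theorem smoothSMul_apply (φ : E → ℝ) (hφ : ContDiffOn ℝ (⊤ : ℕ∞) φ Ω) (f : 𝓓(Ω, F)) (p : E) :
    smoothSMul φ hφ f p = φ p • f p :=
  rfl

end NormedTarget

section L2Form

variable [NormedAddCommGroup F] [InnerProductSpace ℝ F] [MeasurableSpace E] [BorelSpace E]
  (μ : Measure E)

theorem integrable_inner_testFunction [IsFiniteMeasureOnCompacts μ] (f g : 𝓓(Ω, F)) :
    Integrable (fun p => ⟪f p, g p⟫_ℝ) μ :=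
  (f.continuous.inner g.continuous).integrable_of_hasCompactSupport
    (f.hasCompactSupport.mono fun p hp hf => hp (by simp [hf]))

/-- The `L²` inner product of test functions. -/
noncomputable def l2Form [IsFiniteMeasureOnCompacts μ] : LinearMap.BilinForm ℝ 𝓓(Ω, F) :=
  LinearMap.mk₂ ℝ (fun f g => ∫ p, ⟪f p, g p⟫_ℝ ∂μ)
    (fun f₁ f₂ g => by
      simp only [add_apply, inner_add_left]
      exact integral_add (integrable_inner_testFunction μ f₁ g)
        (integrable_inner_testFunction μ f₂ g))
    (fun c f g => by
      simp only [smul_apply, real_inner_smul_left, integral_const_mul, smul_eq_mul])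
    (fun f g₁ g₂ => by
      simp only [add_apply, inner_add_right]
      exact integral_add (integrable_inner_testFunction μ f g₁)
        (integrable_inner_testFunction μ f g₂))
    (fun c f g => by
      simp only [smul_apply, real_inner_smul_right, integral_const_mul, smul_eq_mul])

theorem l2Form_apply [IsFiniteMeasureOnCompacts μ] (f g : 𝓓(Ω, F)) :
    l2Form μ f g = ∫ p, ⟪f p, g p⟫_ℝ ∂μ :=
  rfl

theorem l2Form_smoothSMul_left [IsFiniteMeasureOnCompacts μ] {φ : E → ℝ}
    (hφ : ContDiffOn ℝ (⊤ : ℕ∞) φ Ω) (f g : 𝓓(Ω, F)) :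
    l2Form μ (smoothSMul φ hφ f) g = l2Form μ f (smoothSMul φ hφ g) := by
  simp only [l2Form_apply, smoothSMul_apply, real_inner_smul_left, real_inner_smul_right]

theorem l2Form_lineDerivOp_left [FiniteDimensional ℝ E] [μ.IsAddHaarMeasure] (e : E)
    (f g : 𝓓(Ω, F)) : l2Form μ (∂_{e} f) g = -l2Form μ f (∂_{e} g) := by
  have hf := integrable_inner_testFunction μ (∂_{e} f) g
  have hg := integrable_inner_testFunction μ f (∂_{e} g)
  simp only [lineDerivOp_testFunction_apply] at hf hg
  have h := integral_bilinear_fderiv_right_eq_neg_left_of_integrable (μ := μ) (f := f) (g := g)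
    (v := e) (B := innerSL ℝ)
    hf hg
    (integrable_inner_testFunction μ f g)
    (fun p _ => testFunction_differentiable f p) (fun p _ => testFunction_differentiable g p)
  simp only [l2Form_apply, lineDerivOp_testFunction_apply]
  exact (neg_eq_iff_eq_neg.mpr h).symm

end L2Form

end TestFunctions

section HalfSpace

open TopologicalSpace
open scoped Distributions LineDeriv InnerProductSpace

/-- The open half-space `(0, ∞) × E`, with boundary defining function `x = p.1`. -/
def halfSpace (E : Type*) [TopologicalSpace E] : Opens (ℝ × E) :=
  ⟨Set.Ioi 0 ×ˢ Set.univ, isOpen_Ioi.prod isOpen_univ⟩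

variable {E F : Type*} [NormedAddCommGroup E] [NormedSpace ℝ E]

section ZeroVectorFields

variable [NormedAddCommGroup F] [NormedSpace ℝ F]

theorem contDiffOn_fst_rpow (r : ℝ) :
    ContDiffOn ℝ (⊤ : ℕ∞) (fun p : ℝ × E => p.1 ^ r) (halfSpace E) :=
  contDiffOn_fst.rpow_const_of_ne fun _ hp => hp.1.ne'

/-- Multiplication of test functions on the half-space by the weight `x ^ r`. -/
noncomputable def rpowMul (r : ℝ) : Module.End ℝ 𝓓(halfSpace E, F) :=
  smoothSMul (fun p => p.1 ^ r) (contDiffOn_fst_rpow r)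

theorem rpowMul_apply (r : ℝ) (f : 𝓓(halfSpace E, F)) (p : ℝ × E) :
    rpowMul r f p = p.1 ^ r • f p :=
  rfl

theorem rpowMul_rpowMul (r s : ℝ) (f : 𝓓(halfSpace E, F)) :
    rpowMul r (rpowMul s f) = rpowMul (r + s) f :=
  testFunction_ext_on fun p hp => by
    simp only [rpowMul_apply, Real.rpow_add hp.1, mul_smul]

theorem lineDerivOp_rpowMul (e : ℝ × E) (r : ℝ) (f : 𝓓(halfSpace E, F)) :
    ∂_{e} (rpowMul r f) = rpowMul r (∂_{e} f) + (r * e.1) • rpowMul (r - 1) f :=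
  testFunction_ext_on fun p hp => by
    have hweight : HasFDerivAt (fun q : ℝ × E => q.1 ^ r) _ p :=
      hasFDerivAt_fst.rpow_const (Or.inl hp.1.ne')
    have hprod := hweight.fun_smul (testFunction_differentiable f p).hasFDerivAt
    rw [lineDerivOp_testFunction_apply, show ⇑(rpowMul r f) = fun q => q.1 ^ r • f q from rfl,
      hprod.fderiv]
    simp only [add_apply, smul_apply, rpowMul_apply, lineDerivOp_testFunction_apply,
      ContinuousLinearMap.smulRight_apply, ContinuousLinearMap.coe_fst', smul_eq_mul, smul_smul]
    congr 2
    ring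

/-- The vector field `x ∂_e`, vanishing at the boundary `x = 0`, acting on test functions. -/
noncomputable def scaledDeriv (e : ℝ × E) : Module.End ℝ 𝓓(halfSpace E, F) :=
  rpowMul 1 ∘ₗ (LineDeriv.lineDerivOpCLM ℝ 𝓓(halfSpace E, F) e).toLinearMap

theorem scaledDeriv_eq_rpowMul (e : ℝ × E) (f : 𝓓(halfSpace E, F)) :
    scaledDeriv e f = rpowMul 1 (∂_{e} f) :=
  rfl

theorem scaledDeriv_apply (e : ℝ × E) (f : 𝓓(halfSpace E, F)) (p : ℝ × E) :
    scaledDeriv e f p = p.1 • fderiv ℝ f p e := by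
  rw [scaledDeriv_eq_rpowMul, rpowMul_apply, Real.rpow_one, lineDerivOp_testFunction_apply]

theorem scaledDeriv_scaledDeriv (e e' : ℝ × E) (f : 𝓓(halfSpace E, F)) :
    scaledDeriv e (scaledDeriv e' f) = rpowMul 2 (∂_{e} (∂_{e'} f)) + e.1 • scaledDeriv e' f := by
  simp only [scaledDeriv_eq_rpowMul, lineDerivOp_rpowMul, map_add, map_smul, rpowMul_rpowMul]
  norm_num

theorem lie_scaledDeriv (e e' : ℝ × E) :
    ⁅scaledDeriv (F := F) e, scaledDeriv (F := F) e'⁆ =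
      e.1 • scaledDeriv e' - e'.1 • scaledDeriv e := by
  refine LinearMap.ext fun f => ?_
  change scaledDeriv e (scaledDeriv e' f) - scaledDeriv e' (scaledDeriv e f) =
    e.1 • scaledDeriv e' f - e'.1 • scaledDeriv e f
  rw [scaledDeriv_scaledDeriv, scaledDeriv_scaledDeriv, lineDerivOp_testFunction_comm e']
  abel

end ZeroVectorFields

section WeightedForm

variable [MeasurableSpace E] [BorelSpace E] [NormedAddCommGroup F] [InnerProductSpace ℝ F]
  (μ : Measure (ℝ × E))

/-- The inner product of `L²((0, ∞) × E; x ^ r dμ)` on test functions. -/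
noncomputable def weightedForm [IsFiniteMeasureOnCompacts μ] (r : ℝ) :
    LinearMap.BilinForm ℝ 𝓓(halfSpace E, F) :=
  l2Form μ ∘ₗ rpowMul r

theorem weightedForm_apply [IsFiniteMeasureOnCompacts μ] (r : ℝ) (f g : 𝓓(halfSpace E, F)) :
    weightedForm μ r f g = l2Form μ (rpowMul r f) g :=
  rfl

theorem weightedForm_apply_self [IsFiniteMeasureOnCompacts μ] (r : ℝ) (f : 𝓓(halfSpace E, F)) :
    weightedForm μ r f f =
      ∫ p in Set.Ioi (0 : ℝ) ×ˢ (Set.univ : Set E), p.1 ^ r * ‖f p‖ ^ 2 ∂μ := by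
  rw [setIntegral_eq_integral_of_forall_compl_eq_zero fun p hp => by
    rw [testFunction_eq_zero_of_notMem f hp]; simp]
  simp only [weightedForm_apply, l2Form_apply, rpowMul_apply, real_inner_smul_left,
    real_inner_self_eq_norm_sq]

theorem isPosSemidef_weightedForm [IsFiniteMeasureOnCompacts μ] (r : ℝ) :
    (weightedForm (E := E) (F := F) μ r).IsPosSemidef where
  eq f g := by
    simp only [weightedForm_apply, l2Form_apply, rpowMul_apply, real_inner_smul_left,
      real_inner_comm (f _) (g _)]
  nonneg f := by
    rw [weightedForm_apply_self]
    exact setIntegral_nonneg (measurableSet_Ioi.prod .univ) fun p hp =>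
      mul_nonneg (Real.rpow_nonneg hp.1.le r) (sq_nonneg _)

theorem integrableOn_weighted_norm_sq [IsFiniteMeasureOnCompacts μ] (r : ℝ)
    (f : 𝓓(halfSpace E, F)) :
    IntegrableOn (fun p => p.1 ^ r * ‖f p‖ ^ 2) (Set.Ioi (0 : ℝ) ×ˢ (Set.univ : Set E)) μ := by
  have h := integrable_inner_testFunction μ (rpowMul r f) f
  simp only [rpowMul_apply, real_inner_smul_left, real_inner_self_eq_norm_sq] at h
  exact h.integrableOn

theorem sobolevEnergy_weightedForm [IsFiniteMeasureOnCompacts μ] {ι : Type*} [Fintype ι] (r : ℝ)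
    (X : Module.End ℝ 𝓓(halfSpace E, F)) (Y : ι → Module.End ℝ 𝓓(halfSpace E, F))
    (v : 𝓓(halfSpace E, F)) :
    sobolevEnergy (weightedForm μ r) X Y v =
      ∫ p in Set.Ioi (0 : ℝ) ×ˢ (Set.univ : Set E),
        p.1 ^ r * (‖v p‖ ^ 2 + ‖X v p‖ ^ 2 + ∑ j, ‖Y j v p‖ ^ 2) ∂μ := by
  have hint (f : 𝓓(halfSpace E, F)) := integrableOn_weighted_norm_sq μ r f
  simp only [mul_add, Finset.mul_sum]
  rw [integral_add ((hint v).fun_add (hint (X v))) (integrable_finsetSum _ fun j _ => hint (Y j v)),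
    integral_add (hint v) (hint (X v)), integral_finsetSum _ fun j _ => hint (Y j v)]
  simp only [sobolevEnergy, weightedForm_apply_self]

theorem weightedForm_scaledDeriv_left [FiniteDimensional ℝ E] [μ.IsAddHaarMeasure] (r : ℝ)
    (e : ℝ × E) (f g : 𝓓(halfSpace E, F)) :
    weightedForm μ r (scaledDeriv e f) g =
      weightedForm μ r f (-scaledDeriv e g - ((r + 1) * e.1) • g) := by
  calc weightedForm μ r (scaledDeriv e f) g
      = l2Form μ (rpowMul (r + 1) (∂_{e} f)) g := by
        rw [weightedForm_apply, scaledDeriv_eq_rpowMul, rpowMul_rpowMul]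
    _ = l2Form μ (∂_{e} f) (rpowMul (r + 1) g) := l2Form_smoothSMul_left μ _ _ _
    _ = l2Form μ f (rpowMul r (-scaledDeriv e g - ((r + 1) * e.1) • g)) := by
        rw [l2Form_lineDerivOp_left, lineDerivOp_rpowMul, ← map_neg, map_sub (rpowMul r),
          map_neg (rpowMul r), map_smul, scaledDeriv_eq_rpowMul, rpowMul_rpowMul,
          add_sub_cancel_right]
        congr 1
        abel
    _ = weightedForm μ r f (-scaledDeriv e g - ((r + 1) * e.1) • g) :=
        (l2Form_smoothSMul_left μ _ _ _).symm

theorem isSkewAdjoint_scaledDeriv_add_smul_one [FiniteDimensional ℝ E] [μ.IsAddHaarMeasure]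
    (r : ℝ) (e : ℝ × E) :
    (weightedForm (F := F) μ r).IsSkewAdjoint
      (scaledDeriv e + ((r + 1) * e.1 / 2) • 1 : Module.End ℝ 𝓓(halfSpace E, F)) := by
  intro f g
  simp only [LinearMap.add_apply, LinearMap.smul_apply, Module.End.one_apply, Pi.neg_apply,
    map_add, map_sub, map_neg, map_smul, weightedForm_scaledDeriv_left, smul_eq_mul]
  ring

end WeightedForm

section ComplexValued

variable {m : ℕ} (v : 𝓓(halfSpace (Fin m → ℝ), ℂ)) (p : ℝ × (Fin m → ℝ))

theorem scaledDeriv_normal_apply : scaledDeriv (1, 0) v p = (p.1 : ℂ) * pderivX v p := by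
  rw [scaledDeriv_apply, Complex.real_smul, pderivX]

theorem norm_scaledDeriv_tangential_sq (j : Fin m) :
    ‖scaledDeriv (0, Pi.single j 1) v p‖ ^ 2 = p.1 ^ 2 * ‖pderivY j v p‖ ^ 2 := by
  rw [scaledDeriv_apply, norm_smul, mul_pow, Real.norm_eq_abs, sq_abs, pderivY]

theorem scaledDeriv_tangential_sq_apply (j : Fin m) :
    (scaledDeriv (0, Pi.single j 1) ^ 2 : Module.End ℝ 𝓓(halfSpace (Fin m → ℝ), ℂ)) v p =
      (p.1 : ℂ) ^ 2 * pderivY j (pderivY j v) p := by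
  rw [sq, Module.End.mul_apply, scaledDeriv_scaledDeriv, zero_smul, add_zero, rpowMul_apply,
    lineDerivOp_testFunction_apply, funext (lineDerivOp_testFunction_apply _ v), Real.rpow_two,
    Complex.real_smul, Complex.ofReal_pow]
  rfl

end ComplexValued

theorem kleinGordon_scaledDeriv_eq_Pmodel (n : ℕ) (lam : ℝ)
    (v : 𝓓(halfSpace (Fin (n - 1) → ℝ), ℂ)) (p : ℝ × (Fin (n - 1) → ℝ)) :
    kleinGordon (scaledDeriv (1, 0)) (fun j => scaledDeriv (0, Pi.single j 1)) n lam v p =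
      Pmodel n lam v p := by
  have hsq : (scaledDeriv (1, 0) ^ 2 : Module.End ℝ 𝓓(halfSpace (Fin (n - 1) → ℝ), ℂ)) v p =
      (p.1 : ℂ) * pderivX (fun q => (q.1 : ℂ) * pderivX v q) p := by
    rw [sq, Module.End.mul_apply, scaledDeriv_normal_apply,
      funext (scaledDeriv_normal_apply v)]
  simp [kleinGordon, Pmodel, lapY, hsq, scaledDeriv_normal_apply, scaledDeriv_tangential_sq_apply,
    Finset.mul_sum]

theorem stmt5_general {ι : Type*} [Fintype ι] [FiniteDimensional ℝ E] [MeasurableSpace E]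
    [BorelSpace E] [NormedAddCommGroup F] [InnerProductSpace ℝ F] (μ : Measure (ℝ × E))
    [μ.IsAddHaarMeasure] (e : ι → E) {ν lam lΛ l : ℝ}
    (hlΛ : lΛ = Real.sqrt (max (((ν - 1) / 2) ^ 2 - lam) 0))
    (hl : (l < min (1 / 2) lΛ ∧ l ≠ -lΛ) ∨ max (1 / 2) lΛ < l) :
    ∃ C : ℝ, 0 < C ∧ ∀ v : 𝓓(halfSpace E, F),
      (∫ p in Set.Ioi (0 : ℝ) ×ˢ (Set.univ : Set E),
          p.1 ^ (-2 * l - ν) * (‖v p‖ ^ 2 + ‖scaledDeriv (1, 0) v p‖ ^ 2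
            + ∑ j, ‖scaledDeriv (0, e j) v p‖ ^ 2) ∂μ)
        ≤ C * ∫ p in Set.Ioi (0 : ℝ) ×ˢ (Set.univ : Set E),
            p.1 ^ (-2 * l - ν) *
              ‖kleinGordon (scaledDeriv (1, 0)) (fun j => scaledDeriv (0, e j)) ν lam v p‖ ^ 2
              ∂μ := by
  have hX : (weightedForm μ (-2 * l - ν)).IsSkewAdjoint
      (scaledDeriv (1, 0) - (l + (ν - 1) / 2) • 1 : Module.End ℝ 𝓓(halfSpace E, F)) := by
    convert isSkewAdjoint_scaledDeriv_add_smul_one (F := F) μ (-2 * l - ν) (1, 0) using 2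
    module
  have hY (j : ι) : (weightedForm μ (-2 * l - ν)).IsSkewAdjoint
      (scaledDeriv (0, e j) : Module.End ℝ 𝓓(halfSpace E, F)) := by
    simpa only [mul_zero, zero_div, zero_smul, add_zero] using
      isSkewAdjoint_scaledDeriv_add_smul_one (F := F) μ (-2 * l - ν) (0, e j)
  have hXY (j : ι) : ⁅scaledDeriv (E := E) (F := F) (1, 0), scaledDeriv (F := F) (0, e j)⁆ =
      scaledDeriv (0, e j) := by
    rw [lie_scaledDeriv, one_smul, zero_smul, sub_zero]
  obtain ⟨C, hC, hle⟩ := exists_sobolevEnergy_le_kleinGordon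
    (isPosSemidef_weightedForm μ _) hX hY hXY hlΛ hl
  refine ⟨C, hC, fun v => ?_⟩
  simpa only [sobolevEnergy_weightedForm, weightedForm_apply_self] using hle v

end HalfSpace

/-- the weighted a priori estimate
`‖x^{−l} v‖²_{H¹₀} ≤ C ‖x^{−l} P v‖²_{L²}` (with respect to `x^{−n} dx dy`)
for all smooth compactly supported `v` on `(0,∞) × ℝ^{n−1}`, whenever
`l < min(1/2, l(λ))` and `l ≠ −l(λ)`, or `l > max(1/2, l(λ))`. -/
theorem stmt5 (n : ℕ) (hn : 2 ≤ n) (lam : ℝ) (lΛ : ℝ)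
    (hlΛ : lΛ = Real.sqrt (max (((((n : ℝ) - 1) / 2) ^ 2) - lam) 0))
    (l : ℝ)
    (hl : (l < min (1 / 2) lΛ ∧ l ≠ -lΛ) ∨ max (1 / 2) lΛ < l) :
    ∃ C : ℝ, 0 < C ∧
      ∀ v : ℝ × (Fin (n - 1) → ℝ) → ℂ,
        ContDiff ℝ (⊤ : ℕ∞) v → HasCompactSupport v →
        tsupport v ⊆ {p : ℝ × (Fin (n - 1) → ℝ) | 0 < p.1} →
        (∫ p in Set.Ioi (0 : ℝ) ×ˢ (Set.univ : Set (Fin (n - 1) → ℝ)),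
            p.1 ^ (-2 * l - (n : ℝ)) *
              (‖v p‖ ^ 2 + ‖(p.1 : ℂ) * pderivX v p‖ ^ 2
                + p.1 ^ 2 * ∑ j, ‖pderivY j v p‖ ^ 2))
          ≤ C * ∫ p in Set.Ioi (0 : ℝ) ×ˢ (Set.univ : Set (Fin (n - 1) → ℝ)),
              p.1 ^ (-2 * l - (n : ℝ)) * ‖Pmodel n (lam : ℂ) v p‖ ^ 2 := by
  obtain ⟨C, hC, hle⟩ := stmt5_general (E := Fin (n - 1) → ℝ) (F := ℂ) (volume.prod volume)
    (fun j => Pi.single j 1) hlΛ hl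
  refine ⟨C, hC, fun v hv hv_compact hv_supp => ?_⟩
  have hle_v := hle ⟨v, hv, hv_compact, fun p hp => ⟨hv_supp hp, trivial⟩⟩
  simp only [scaledDeriv_normal_apply, norm_scaledDeriv_tangential_sq, ← Finset.mul_sum,
    kleinGordon_scaledDeriv_eq_Pmodel] at hle_v
  exact hle_v
end

section
/- Let n ≥ 2 be an integer, λ ∈ ℝ, and l(λ) = √(max(((n−1)/2)² − λ, 0)). Suppose l ∈ ℝ satisfies either l < −max(1/2, l(λ)), or (l > −min(1/2, l(λ)) and l ≠ l(λ)). Then for every measurable f : (0,∞) × ℝ^{n−1} → ℂ with ∫∫ x^{−2l−n} |f|² dx dy < ∞, there exists a measurable u with ∫∫ x^{−2l−n} |u|² dx dy < ∞ which solves P u = f in the distributional sense: for every smooth compactly supported v : (0,∞) × ℝ^{n−1} → ℂ, ∫∫ u · conj(P v) · x^{−n} dx dy = ∫∫ f · conj(v) · x^{−n} dx dy. -/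
open MeasureTheory

/-!
By duality (Hahn–Banach and Riesz) it is enough to bound `v` by `P v`, for test functions `v`, in
the weighted `L²` space dual to the one containing `f`. Conjugation by `x ^ (l - n / 2)` turns that
space into `L²(dx dy)` and `P` into `Q = -(D - l)² + ν + ∑ⱼ Yⱼ²`, where `ν = ((n - 1) / 2)² - λ` and
`D = x ∂ₓ + 1 / 2`, `Yⱼ = x ∂_{yⱼ}` are skew-symmetric with `⁅D, Yⱼ⁆ = Yⱼ`. These relations alone
give `Re ⟪Q v, v⟫ = ‖D v‖² + (ν - l²) ‖v‖² - ∑ⱼ ‖Yⱼ v‖²` and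
`Re ⟪Q v, D v⟫ = 2 l ‖D v‖² + ∑ⱼ ‖Yⱼ v‖²`. For the weights `l` under consideration some combination
of the two, i.e. pairing `Q v` with `(α D + β) v`, bounds `‖D v‖² + ‖v‖²`, hence `‖v‖ ≤ C ‖Q v‖`.
-/

namespace KleinGordon

open TopologicalSpace (Opens)
open LineDeriv
open scoped InnerProductSpace Distributions ContDiff ComplexConjugate

/-- The weights `l` for which the energy method controls `-(D - l)² + ν + ∑ⱼ Yⱼ²`: the first
alternative is served by the multipliers `±(D + 1)`, the second one by `D - l`. -/
def IsAdmissibleWeight (ν l : ℝ) : Prop :=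
  0 < (2 * l + 1) * (ν - l ^ 2) ∨ 0 < l ∧ ν < l ^ 2

theorem isAdmissibleWeight_of_lt_or_lt {l ν : ℝ}
    (hl : l < -max (1 / 2) √(max ν 0) ∨ -min (1 / 2) √(max ν 0) < l ∧ l ≠ √(max ν 0)) :
    IsAdmissibleWeight ν l := by
  have hν : ν ≤ √(max ν 0) ^ 2 :=
    (le_max_left ν 0).trans (Real.sq_sqrt (le_max_right ν 0)).ge
  have hs := Real.sqrt_nonneg (max ν 0)
  rcases hl with hl | ⟨hl, hne⟩
  · obtain ⟨hl_half, hl_sqrt⟩ := max_lt_iff.1 (lt_neg.1 hl)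
    exact .inl (mul_pos_of_neg_of_neg (by linarith) (by nlinarith))
  · obtain ⟨hl_half, hl_sqrt⟩ := lt_min_iff.1 (neg_lt.1 hl)
    rcases lt_or_ge (l ^ 2) ν with hlν | hlν
    · exact .inl (mul_pos (by linarith) (by linarith))
    · have hle_abs : √(max ν 0) ≤ |l| :=
        Real.sqrt_sq_eq_abs l ▸ Real.sqrt_le_sqrt (max_le hlν (sq_nonneg l))
      have hlt : √(max ν 0) < l :=
        lt_of_le_of_ne ((le_abs.1 hle_abs).resolve_right fun h ↦ by linarith) hne.symm
      exact .inr ⟨hs.trans_lt hlt, by nlinarith⟩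

section HilbertSpace

variable {𝕜 V H : Type*} [RCLike 𝕜] [AddCommGroup V] [Module 𝕜 V]
  [NormedAddCommGroup H] [InnerProductSpace 𝕜 H]

theorem exists_forall_inner_eq_of_norm_le [CompleteSpace H] {A B : V →ₗ[𝕜] H}
    (h : ∃ C, ∀ v, ‖B v‖ ≤ C * ‖A v‖) (F : H) :
    ∃ U : H, ∀ v, ⟪A v, U⟫_𝕜 = ⟪B v, F⟫_𝕜 := by
  let φ : StrongDual 𝕜 A.range := (innerSL 𝕜 F).comp (B.compLeftInverse A)
  obtain ⟨g, hg, -⟩ := exists_extension_norm_eq A.range φ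
  refine ⟨(InnerProductSpace.toDual 𝕜 H).symm g, fun v ↦ ?_⟩
  rw [← inner_conj_symm, ← inner_conj_symm (B v), InnerProductSpace.toDual_symm_apply]
  congr 1
  calc g (A v) = ⟪F, B.compLeftInverse A ⟨A v, v, rfl⟩⟫_𝕜 := hg ⟨A v, v, rfl⟩
    _ = ⟪F, B v⟫_𝕜 := by rw [LinearMap.compLeftInverse_apply_of_bdd B A h v (A v) rfl]

variable (𝕜) in
theorem norm_le_of_re_inner_coercive {a b q : H} {α β c d : ℝ} (hc : 0 < c) (hd : 0 < d)
    (h : c * ‖b‖ ^ 2 + d * ‖a‖ ^ 2 ≤ α * RCLike.re ⟪q, b⟫_𝕜 + β * RCLike.re ⟪q, a⟫_𝕜) :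
    ‖a‖ ≤ (|α| + |β|) / min c d * ‖q‖ := by
  have re_inner_le (δ : ℝ) (w : H) (hw : ‖w‖ ≤ max ‖a‖ ‖b‖) :
      δ * RCLike.re ⟪q, w⟫_𝕜 ≤ |δ| * ‖q‖ * max ‖a‖ ‖b‖ :=
    calc δ * RCLike.re ⟪q, w⟫_𝕜 ≤ |δ| * |RCLike.re ⟪q, w⟫_𝕜| := abs_mul δ _ ▸ le_abs_self _
      _ ≤ |δ| * (‖q‖ * max ‖a‖ ‖b‖) := by
        gcongr
        exact (RCLike.abs_re_le_norm _).trans ((norm_inner_le_norm q w).trans (by gcongr))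
      _ = |δ| * ‖q‖ * max ‖a‖ ‖b‖ := by ring
  have hmax : min c d * max ‖a‖ ‖b‖ ^ 2 ≤ c * ‖b‖ ^ 2 + d * ‖a‖ ^ 2 := by
    rcases max_cases ‖a‖ ‖b‖ with ⟨hm, -⟩ | ⟨hm, -⟩ <;> rw [hm]
    · nlinarith [min_le_right c d, sq_nonneg ‖a‖, mul_nonneg hc.le (sq_nonneg ‖b‖)]
    · nlinarith [min_le_left c d, sq_nonneg ‖b‖, mul_nonneg hd.le (sq_nonneg ‖a‖)]
  have hm : 0 < min c d := lt_min hc hd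
  have hquad : min c d * max ‖a‖ ‖b‖ ^ 2 ≤ (|α| + |β|) * ‖q‖ * max ‖a‖ ‖b‖ := by
    linarith [re_inner_le α b (le_max_right _ _), re_inner_le β a (le_max_left _ _)]
  rcases (norm_nonneg a).eq_or_lt with ha | ha
  · rw [← ha]; positivity
  · have hmax_pos := ha.trans_le (le_max_left ‖a‖ ‖b‖)
    refine (le_max_left ‖a‖ ‖b‖).trans ?_
    rw [div_mul_eq_mul_div, le_div_iff₀ hm]
    nlinarith

/-- The operator `A` is skew-symmetric for the (possibly degenerate) inner product pulled back
along `ι : V → H`. -/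
def IsSkewFor (ι : V →ₗ[𝕜] H) (A : Module.End 𝕜 V) : Prop :=
  ∀ a b, ⟪ι (A a), ι b⟫_𝕜 = -⟪ι a, ι (A b)⟫_𝕜

variable {ι : V →ₗ[𝕜] H} {D A : Module.End 𝕜 V}

theorem IsSkewFor.re_inner_apply_self (hA : IsSkewFor ι A) (v : V) :
    RCLike.re ⟪ι (A v), ι v⟫_𝕜 = 0 := by
  have h := congrArg RCLike.re (hA v v)
  rw [map_neg, inner_re_symm (ι v)] at h
  linarith

theorem IsSkewFor.re_inner_sq_self (hA : IsSkewFor ι A) (v : V) :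
    RCLike.re ⟪ι (A (A v)), ι v⟫_𝕜 = -‖ι (A v)‖ ^ 2 := by
  rw [hA, map_neg, ← norm_sq_eq_re_inner]

theorem IsSkewFor.re_inner_sq_of_lie_eq (hD : IsSkewFor ι D) (hA : IsSkewFor ι A)
    (hDA : ⁅D, A⁆ = A) (v : V) :
    RCLike.re ⟪ι (A (A v)), ι (D v)⟫_𝕜 = ‖ι (A v)‖ ^ 2 := by
  have hcomm : A (D v) = D (A v) - A v := by
    have h : D (A v) - A (D v) = A v := LinearMap.congr_fun hDA v
    exact eq_sub_of_add_eq' (sub_eq_iff_eq_add.1 h).symm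
  rw [hA, hcomm, map_sub, inner_sub_right, neg_sub, map_sub, ← norm_sq_eq_re_inner,
    inner_re_symm, hD.re_inner_apply_self, sub_zero]

variable {J : Type*} [Fintype J]

/-- The operator `-(D - l)² + ν + ∑ⱼ Yⱼ²`: the form taken by the Klein–Gordon operator after
conjugation by a power of `x`, with abstract operators `D` and `Yⱼ` in place of `x ∂ₓ + 1 / 2` and
`x ∂_{yⱼ}`. -/
noncomputable def conjugatedOp (D : Module.End 𝕜 V) (Y : J → Module.End 𝕜 V) (l ν : ℝ) :
    Module.End 𝕜 V :=
  -(D - (l : 𝕜) • 1) ^ 2 + (ν : 𝕜) • 1 + ∑ j, Y j ^ 2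

variable {Y : J → Module.End 𝕜 V}

theorem conjugatedOp_apply (l ν : ℝ) (v : V) :
    conjugatedOp D Y l ν v
      = -D (D v) + ((2 * l : ℝ) : 𝕜) • D v + ((ν - l ^ 2 : ℝ) : 𝕜) • v + ∑ j, Y j (Y j v) := by
  simp only [conjugatedOp, pow_two, LinearMap.add_apply, LinearMap.neg_apply, LinearMap.sub_apply,
    LinearMap.smul_apply, LinearMap.sum_apply, Module.End.mul_apply, Module.End.one_apply, map_sub,
    map_smul, RCLike.ofReal_mul, RCLike.ofReal_ofNat]
  module

theorem re_inner_conjugatedOp_self (hD : IsSkewFor ι D) (hY : ∀ j, IsSkewFor ι (Y j))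
    (l ν : ℝ) (v : V) :
    RCLike.re ⟪ι (conjugatedOp D Y l ν v), ι v⟫_𝕜
      = ‖ι (D v)‖ ^ 2 + (ν - l ^ 2) * ‖ι v‖ ^ 2 - ∑ j, ‖ι (Y j v)‖ ^ 2 := by
  simp only [conjugatedOp_apply, map_add, map_neg, map_smul, map_sum, inner_add_left,
    inner_neg_left, inner_smul_left, sum_inner, RCLike.conj_ofReal, RCLike.re_ofReal_mul,
    hD.re_inner_sq_self, (hY _).re_inner_sq_self, hD.re_inner_apply_self, ← norm_sq_eq_re_inner,
    Finset.sum_neg_distrib]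
  ring

theorem re_inner_conjugatedOp_generator (hD : IsSkewFor ι D) (hY : ∀ j, IsSkewFor ι (Y j))
    (hDY : ∀ j, ⁅D, Y j⁆ = Y j) (l ν : ℝ) (v : V) :
    RCLike.re ⟪ι (conjugatedOp D Y l ν v), ι (D v)⟫_𝕜
      = 2 * l * ‖ι (D v)‖ ^ 2 + ∑ j, ‖ι (Y j v)‖ ^ 2 := by
  have hself : RCLike.re ⟪ι v, ι (D v)⟫_𝕜 = 0 := by
    rw [inner_re_symm, hD.re_inner_apply_self]
  simp only [conjugatedOp_apply, map_add, map_neg, map_smul, map_sum, inner_add_left,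
    inner_neg_left, inner_smul_left, sum_inner, RCLike.conj_ofReal, RCLike.re_ofReal_mul,
    hD.re_inner_apply_self (D v), hD.re_inner_sq_of_lie_eq (hY _) (hDY _), hself,
    ← norm_sq_eq_re_inner]
  ring

theorem exists_norm_le_conjugatedOp_of_multiplier (hD : IsSkewFor ι D)
    (hY : ∀ j, IsSkewFor ι (Y j)) (hDY : ∀ j, ⁅D, Y j⁆ = Y j) {l ν : ℝ} (α β : ℝ)
    (hc : 0 < 2 * α * l + β) (hd : 0 < β * (ν - l ^ 2)) (hβα : β ≤ α) :
    ∃ C, ∀ v, ‖ι v‖ ≤ C * ‖ι (conjugatedOp D Y l ν v)‖ := by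
  refine ⟨_, fun v ↦ norm_le_of_re_inner_coercive 𝕜 (α := α) (β := β) (b := ι (D v)) hc hd ?_⟩
  have hsum : 0 ≤ (α - β) * ∑ j, ‖ι (Y j v)‖ ^ 2 :=
    mul_nonneg (sub_nonneg.2 hβα) (Finset.sum_nonneg fun j _ ↦ sq_nonneg _)
  rw [re_inner_conjugatedOp_generator hD hY hDY, re_inner_conjugatedOp_self hD hY]
  linarith

theorem exists_norm_le_conjugatedOp (hD : IsSkewFor ι D) (hY : ∀ j, IsSkewFor ι (Y j))
    (hDY : ∀ j, ⁅D, Y j⁆ = Y j) {l ν : ℝ} (h : IsAdmissibleWeight ν l) :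
    ∃ C, ∀ v, ‖ι v‖ ≤ C * ‖ι (conjugatedOp D Y l ν v)‖ := by
  have estimate := exists_norm_le_conjugatedOp_of_multiplier hD hY hDY (l := l) (ν := ν)
  rcases h with h | ⟨hl, hν⟩
  · rcases pos_and_pos_or_neg_and_neg_of_mul_pos h with ⟨hl, hν⟩ | ⟨hl, hν⟩
    · exact estimate 1 1 (by linarith) (by linarith) le_rfl
    · exact estimate (-1) (-1) (by linarith) (by linarith) le_rfl
  · exact estimate 1 (-l) (by linarith) (by nlinarith) (by linarith)

end HilbertSpace

section TestFunctions

variable {E G : Type*} [NormedAddCommGroup E] [NormedSpace ℝ E] [NormedAddCommGroup G]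
  [NormedSpace ℝ G] {Ω : Opens E}

theorem lineDerivOp_apply (e : E) (v : 𝓓(Ω, G)) (p : E) : (∂_{e} v) p = fderiv ℝ v p e := by
  rw [TestFunction.lineDerivOp_eq_lineDerivCLM ℝ, TestFunction.lineDerivCLM_eq_fderivCLM,
    TestFunction.fderivCLM_apply_of_le]
  simp

theorem differentiable_testFunction (v : 𝓓(Ω, G)) : Differentiable ℝ v :=
  v.contDiff.differentiable (by simp)

theorem testFunction_eq_zero_of_notMem (v : 𝓓(Ω, G)) {p : E} (hp : p ∉ Ω) : v p = 0 :=
  image_eq_zero_of_notMem_tsupport fun h ↦ hp (v.tsupport_subset h)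

theorem testFunction_ext_of_mem {v w : 𝓓(Ω, G)} (h : ∀ p ∈ Ω, v p = w p) : v = w := by
  ext p
  by_cases hp : p ∈ Ω
  · exact h p hp
  · rw [testFunction_eq_zero_of_notMem v hp, testFunction_eq_zero_of_notMem w hp]

theorem lineDerivOp_comm (e e' : E) (v : 𝓓(Ω, G)) : ∂_{e} (∂_{e'} v) = ∂_{e'} (∂_{e} v) := by
  have hdiff (p : E) : DifferentiableAt ℝ (fderiv ℝ v) p :=
    (v.contDiff.fderiv_right (m := 1) (by norm_cast)).differentiable (by simp) p
  have hsnd (e e' p : E) : (∂_{e} (∂_{e'} v)) p = fderiv ℝ (fderiv ℝ v) p e e' := by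
    have hcoe : ⇑(∂_{e'} v : 𝓓(Ω, G)) = fun q ↦ fderiv ℝ v q e' := funext (lineDerivOp_apply e' v)
    rw [lineDerivOp_apply, hcoe, fderiv_clm_apply (hdiff p) (differentiableAt_const _)]
    simp
  ext p
  rw [hsnd, hsnd]
  refine v.contDiff.contDiffAt.isSymmSndFDerivAt ?_ e e'
  rw [minSmoothness_of_isRCLikeNormedField]
  exact WithTop.coe_le_coe.2 le_top

variable [MeasurableSpace E] [BorelSpace E]

theorem memLp_testFunction (μ : Measure E) [IsFiniteMeasureOnCompacts μ]
    (q : ENNReal) (v : 𝓓(Ω, G)) : MemLp v q (μ.restrict Ω) :=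
  (v.continuous.memLp_of_hasCompactSupport v.hasCompactSupport).restrict _

/-- The inclusion of the test functions on `Ω` into `L²(Ω, μ)`. -/
noncomputable def toL2 (μ : Measure E) [IsFiniteMeasureOnCompacts μ] :
    𝓓(Ω, ℂ) →ₗ[ℂ] Lp ℂ 2 (μ.restrict Ω) where
  toFun v := (memLp_testFunction μ 2 v).toLp v
  map_add' v w := MemLp.toLp_add (memLp_testFunction μ 2 v) (memLp_testFunction μ 2 w)
  map_smul' c v := MemLp.toLp_const_smul c (memLp_testFunction μ 2 v)

theorem inner_toLp_toLp {𝕜 α : Type*} [RCLike 𝕜] [MeasurableSpace α] {μ : Measure α} {f g : α → 𝕜}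
    (hf : MemLp f 2 μ) (hg : MemLp g 2 μ) :
    ⟪hf.toLp f, hg.toLp g⟫_𝕜 = ∫ p, g p * conj (f p) ∂μ := by
  rw [L2.inner_def]
  refine integral_congr_ae ?_
  filter_upwards [hf.coeFn_toLp, hg.coeFn_toLp] with p hfp hgp
  rw [hfp, hgp, RCLike.inner_apply]

theorem inner_toL2 (μ : Measure E) [IsFiniteMeasureOnCompacts μ] (v w : 𝓓(Ω, ℂ)) :
    ⟪toL2 μ v, toL2 μ w⟫_ℂ = ∫ p, w p * conj (v p) ∂μ := by
  rw [toL2, LinearMap.coe_mk, AddHom.coe_mk, inner_toLp_toLp]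
  refine setIntegral_eq_integral_of_forall_compl_eq_zero fun p hp ↦ ?_
  rw [testFunction_eq_zero_of_notMem w hp, zero_mul]

theorem isSkewFor_lineDerivOp [FiniteDimensional ℝ E] (μ : Measure E) [μ.IsAddHaarMeasure] (e : E) :
    IsSkewFor (toL2 μ) (lineDerivOpCLM ℂ 𝓓(Ω, ℂ) e).toLinearMap := by
  intro v w
  have hint (a b : 𝓓(Ω, ℂ)) : Integrable (fun p ↦ a p * conj (b p)) μ :=
    (a.continuous.mul (Complex.continuous_conj.comp b.continuous)).integrable_of_hasCompactSupport
      a.hasCompactSupport.mul_right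
  have hconj (p : E) : HasFDerivAt (fun q ↦ conj (v q))
      (Complex.conjCLE.toContinuousLinearMap ∘L fderiv ℝ v p) p :=
    Complex.conjCLE.hasFDerivAt.comp p (differentiable_testFunction v p).hasFDerivAt
  have hconj_apply (p : E) : fderiv ℝ (fun q ↦ conj (v q)) p e = conj ((∂_{e} v) p) := by
    rw [(hconj p).fderiv, lineDerivOp_apply]
    rfl
  simp only [ContinuousLinearMap.coe_coe, lineDerivOpCLM_apply, inner_toL2, ← hconj_apply,
    lineDerivOp_apply e w]
  refine integral_mul_fderiv_eq_neg_fderiv_mul_of_integrable (𝕜 := ℂ) ?_ ?_ (hint w v)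
    (fun p _ ↦ differentiable_testFunction w p) (fun p _ ↦ (hconj p).differentiableAt)
  · simpa only [lineDerivOp_apply] using hint (∂_{e} w) v
  · simpa only [hconj_apply] using hint w (∂_{e} v)

end TestFunctions

section WeightedL2

variable {Y : Type*} [TopologicalSpace Y]

variable (Y) in
/-- The open half space `(0, ∞) × Y`. -/
def halfSpace : Opens (ℝ × Y) := ⟨Set.Ioi 0 ×ˢ Set.univ, isOpen_Ioi.prod isOpen_univ⟩

variable [MeasurableSpace Y] [OpensMeasurableSpace Y]

theorem memLp_rpow_smul_iff (μ : Measure (ℝ × Y)) (t : ℝ) {g : ℝ × Y → ℂ} (hg : Measurable g) :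
    MemLp (fun p ↦ p.1 ^ t • g p) 2 (μ.restrict (halfSpace Y)) ↔
      ∫⁻ p in halfSpace Y, ENNReal.ofReal (p.1 ^ (2 * t) * ‖g p‖ ^ 2) ∂μ < ⊤ := by
  have hmeas : Measurable fun p : ℝ × Y ↦ p.1 ^ t • g p := (measurable_fst.pow_const t).smul hg
  rw [MemLp, and_iff_right hmeas.aestronglyMeasurable,
    eLpNorm_lt_top_iff_lintegral_rpow_enorm_lt_top two_ne_zero ENNReal.ofNat_ne_top]
  refine iff_of_eq (congrArg (· < ⊤) (setLIntegral_congr_fun (halfSpace Y).isOpen.measurableSet ?_))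
  intro p hp
  have hx : 0 < p.1 := hp.1
  simp only [ENNReal.toReal_ofNat, ENNReal.rpow_ofNat]
  rw [← ofReal_norm, ← ENNReal.ofReal_pow (norm_nonneg _), norm_smul, mul_pow, Real.norm_eq_abs,
    sq_abs, mul_comm 2 t, Real.rpow_mul hx.le, Real.rpow_ofNat]

theorem exists_measurable_toLp_rpow_smul_eq {μ : Measure (ℝ × Y)} (t : ℝ)
    (U : Lp ℂ 2 (μ.restrict (halfSpace Y))) :
    ∃ u : ℝ × Y → ℂ, Measurable u ∧
      ∃ hu : MemLp (fun p ↦ p.1 ^ t • u p) 2 (μ.restrict (halfSpace Y)), hu.toLp _ = U := by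
  refine ⟨fun p ↦ p.1 ^ (-t) • U p,
    (measurable_fst.pow_const _).smul (Lp.stronglyMeasurable U).measurable, ?_⟩
  have hU : U =ᵐ[μ.restrict (halfSpace Y)] fun p ↦ p.1 ^ t • p.1 ^ (-t) • U p := by
    filter_upwards [ae_restrict_mem (halfSpace Y).isOpen.measurableSet] with p hp
    rw [smul_smul, ← Real.rpow_add hp.1, add_neg_cancel, Real.rpow_zero, one_smul]
  exact ⟨(memLp_congr_ae hU).1 (Lp.memLp U), Lp.ext ((MemLp.coeFn_toLp _).trans hU.symm)⟩

end WeightedL2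

section HalfSpace

variable {Y : Type*} [NormedAddCommGroup Y] [NormedSpace ℝ Y]

theorem contDiff_rpow_smul (r : ℝ) (v : 𝓓(halfSpace Y, ℂ)) :
    ContDiff ℝ ∞ fun p ↦ p.1 ^ r • v p := by
  refine contDiff_iff_contDiffAt.2 fun p ↦ ?_
  by_cases hp : p ∈ tsupport v
  · have hp_pos : 0 < p.1 := (v.tsupport_subset hp).1
    exact (contDiffAt_fst.rpow_const_of_ne hp_pos.ne').smul v.contDiff.contDiffAt
  · refine (contDiffAt_const (c := 0)).congr_of_eventuallyEq ?_
    filter_upwards [notMem_tsupport_iff_eventuallyEq.1 hp] with q hq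
    rw [hq, Pi.zero_apply, smul_zero]

/-- Multiplication by the power `x ^ r` of the boundary defining function `x`, as an operator on
test functions. -/
noncomputable def rpowMul (r : ℝ) : Module.End ℂ 𝓓(halfSpace Y, ℂ) where
  toFun v :=
    { toFun := fun p ↦ p.1 ^ r • v p
      contDiff' := contDiff_rpow_smul r v
      hasCompactSupport' := v.hasCompactSupport.smul_left (f := fun p : ℝ × Y ↦ p.1 ^ r)
      tsupport_subset' :=
        (tsupport_smul_subset_right (fun p : ℝ × Y ↦ p.1 ^ r) v).trans v.tsupport_subset }
  map_add' v w := TestFunction.ext fun p ↦ smul_add _ (v p) (w p)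
  map_smul' c v := TestFunction.ext fun p ↦ smul_comm _ c (v p)

theorem rpowMul_apply (r : ℝ) (v : 𝓓(halfSpace Y, ℂ)) (p : ℝ × Y) :
    rpowMul r v p = p.1 ^ r • v p := rfl

theorem rpowMul_zero (v : 𝓓(halfSpace Y, ℂ)) : rpowMul 0 v = v := by
  ext p
  rw [rpowMul_apply, Real.rpow_zero, one_smul]

theorem rpowMul_rpowMul (r s : ℝ) (v : 𝓓(halfSpace Y, ℂ)) :
    rpowMul r (rpowMul s v) = rpowMul (r + s) v :=
  testFunction_ext_of_mem fun p hp ↦ by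
    rw [rpowMul_apply, rpowMul_apply, rpowMul_apply, smul_smul, Real.rpow_add hp.1]

theorem lineDerivOp_rpowMul (e : ℝ × Y) (r : ℝ) (v : 𝓓(halfSpace Y, ℂ)) :
    ∂_{e} (rpowMul r v) = rpowMul r (∂_{e} v) + ((r * e.1 : ℝ) : ℂ) • rpowMul (r - 1) v :=
  testFunction_ext_of_mem fun p hp ↦ by
    have hderiv : HasFDerivAt (rpowMul r v) _ p :=
      ((hasFDerivAt_fst (𝕜 := ℝ)).rpow_const (Or.inl (ne_of_gt hp.1))).smul
        (differentiable_testFunction v p).hasFDerivAt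
    rw [lineDerivOp_apply, hderiv.fderiv]
    simp only [add_apply, smul_apply, Complex.real_smul, ContinuousLinearMap.smulRight_apply,
      ContinuousLinearMap.coe_fst', smul_eq_mul, Complex.ofReal_mul, rpowMul_apply,
      lineDerivOp_apply]
    ring

/-- The vector field `x ∂_e` acting on test functions: these vector fields generate the algebra of
`0`-differential operators. -/
noncomputable def zeroDeriv (e : ℝ × Y) : Module.End ℂ 𝓓(halfSpace Y, ℂ) :=
  rpowMul 1 * (lineDerivOpCLM ℂ 𝓓(halfSpace Y, ℂ) e).toLinearMap

theorem zeroDeriv_eq (e : ℝ × Y) (v : 𝓓(halfSpace Y, ℂ)) :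
    zeroDeriv e v = rpowMul 1 (∂_{e} v) := rfl

theorem zeroDeriv_apply (e : ℝ × Y) (v : 𝓓(halfSpace Y, ℂ)) (p : ℝ × Y) :
    zeroDeriv e v p = p.1 * fderiv ℝ v p e := by
  rw [zeroDeriv_eq, rpowMul_apply, lineDerivOp_apply, Real.rpow_one, Complex.real_smul]

theorem zeroDeriv_rpowMul (e : ℝ × Y) (r : ℝ) (v : 𝓓(halfSpace Y, ℂ)) :
    zeroDeriv e (rpowMul r v) = rpowMul r (zeroDeriv e v) + ((r * e.1 : ℝ) : ℂ) • rpowMul r v := by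
  simp only [zeroDeriv_eq, lineDerivOp_rpowMul, map_add, map_smul, rpowMul_rpowMul,
    add_sub_cancel, add_comm]

theorem zeroDeriv_zeroDeriv (e e' : ℝ × Y) (v : 𝓓(halfSpace Y, ℂ)) :
    zeroDeriv e (zeroDeriv e' v) = rpowMul 2 (∂_{e} (∂_{e'} v)) + (e.1 : ℂ) • zeroDeriv e' v := by
  rw [zeroDeriv_eq e' v, zeroDeriv_rpowMul, zeroDeriv_eq e, rpowMul_rpowMul, one_mul,
    one_add_one_eq_two]

theorem lie_zeroDeriv (e e' : ℝ × Y) :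
    ⁅zeroDeriv e, zeroDeriv e'⁆ = (e.1 : ℂ) • zeroDeriv e' - (e'.1 : ℂ) • zeroDeriv e := by
  ext1 v
  rw [Ring.lie_def, LinearMap.sub_apply, Module.End.mul_apply, Module.End.mul_apply,
    zeroDeriv_zeroDeriv, zeroDeriv_zeroDeriv, lineDerivOp_comm e e', add_sub_add_left_eq_sub]
  rfl

variable {J : Type*} [Fintype J]

/-- The Klein–Gordon operator `-(x ∂ₓ)² + d x ∂ₓ + ∑ⱼ (x ∂_{b j})² - lam` with the boundary
Laplacian `∑ⱼ ∂_{b j}²`; the model operator has `d = n - 1` and `b` the standard basis. -/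
noncomputable def kleinGordon (b : J → Y) (d lam : ℝ) : Module.End ℂ 𝓓(halfSpace Y, ℂ) :=
  -zeroDeriv (1, 0) ^ 2 + (d : ℂ) • zeroDeriv (1, 0) + ∑ j, zeroDeriv (0, b j) ^ 2 - (lam : ℂ) • 1

variable (Y) in
/-- The generator `x ∂ₓ + 1 / 2` of the `L²`-unitary dilations in the variable `x`; it plays the
role of `D` in `conjugatedOp`. -/
noncomputable def scalingGenerator : Module.End ℂ 𝓓(halfSpace Y, ℂ) :=
  zeroDeriv (1, 0) + ((1 / 2 : ℝ) : ℂ) • 1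

theorem lie_scalingGenerator_zeroDeriv (y : Y) :
    ⁅scalingGenerator Y, zeroDeriv (0, y)⁆ = zeroDeriv (0, y) := by
  calc ⁅scalingGenerator Y, zeroDeriv (0, y)⁆ = ⁅zeroDeriv ((1, 0) : ℝ × Y), zeroDeriv (0, y)⁆ := by
        simp only [scalingGenerator, Ring.lie_def, add_mul, mul_add, smul_mul_assoc,
          mul_smul_comm, one_mul, mul_one, add_sub_add_right_eq_sub]
    _ = zeroDeriv (0, y) := by
        rw [lie_zeroDeriv, Complex.ofReal_one, one_smul, Complex.ofReal_zero, zero_smul, sub_zero]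

theorem semiconjBy_rpowMul_zeroDeriv (e : ℝ × Y) (r : ℝ) :
    SemiconjBy (rpowMul r) (zeroDeriv e) (zeroDeriv e - ((r * e.1 : ℝ) : ℂ) • 1) := by
  ext1 v
  simp only [Module.End.mul_apply, LinearMap.sub_apply, LinearMap.smul_apply, Module.End.one_apply,
    zeroDeriv_rpowMul, add_sub_cancel_right]

theorem neg_sq_add_smul_sub_eq {K A : Type*} [Field K] [CharZero K] [Ring A] [Algebra K A] (T : A)
    (d lam : K) :
    -(T + (d / 2) • 1) ^ 2 + d • (T + (d / 2) • 1) - lam • 1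
      = -T ^ 2 + ((d / 2) ^ 2 - lam) • 1 := by
  simp only [pow_two, add_mul, mul_add, smul_mul_assoc, mul_smul_comm, one_mul, mul_one]
  module

theorem semiconjBy_rpowMul_kleinGordon (b : J → Y) (d lam l : ℝ) :
    SemiconjBy (rpowMul (l - (d + 1) / 2)) (kleinGordon b d lam)
      (conjugatedOp (scalingGenerator Y) (fun j ↦ zeroDeriv (0, b j)) l ((d / 2) ^ 2 - lam)) := by
  have hnormal := semiconjBy_rpowMul_zeroDeriv ((1, 0) : ℝ × Y) (l - (d + 1) / 2)
  have htangential (j : J) :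
      SemiconjBy (rpowMul (l - (d + 1) / 2)) (zeroDeriv (0, b j)) (zeroDeriv (0, b j)) := by
    simpa using semiconjBy_rpowMul_zeroDeriv (0, b j) (l - (d + 1) / 2)
  have hshift : zeroDeriv ((1, 0) : ℝ × Y) - (((l - (d + 1) / 2) * 1 : ℝ) : ℂ) • 1
      = (scalingGenerator Y - (l : ℂ) • 1) + ((d : ℂ) / 2) • 1 := by
    rw [scalingGenerator]
    push_cast
    module
  have hop : conjugatedOp (scalingGenerator Y) (fun j ↦ zeroDeriv (0, b j)) l ((d / 2) ^ 2 - lam)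
      = -(zeroDeriv ((1, 0) : ℝ × Y) - (((l - (d + 1) / 2) * 1 : ℝ) : ℂ) • 1) ^ 2
        + (d : ℂ) • (zeroDeriv ((1, 0) : ℝ × Y) - (((l - (d + 1) / 2) * 1 : ℝ) : ℂ) • 1)
        + ∑ j, zeroDeriv (0, b j) ^ 2 - (lam : ℂ) • 1 := by
    rw [hshift, add_sub_right_comm, neg_sq_add_smul_sub_eq, conjugatedOp]
    push_cast
    rfl
  rw [hop]
  exact (((hnormal.pow_right 2).neg_right.add_right (hnormal.smul_right d)).add_right
    (Commute.sum_right _ _ _ fun j _ ↦ (htangential j).pow_right 2)).sub_right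
    ((Commute.one_right _).smul_right _)

theorem kleinGordon_apply (b : J → Y) (d lam : ℝ) (v : 𝓓(halfSpace Y, ℂ)) (p : ℝ × Y) :
    kleinGordon b d lam v p
      = -(p.1 * fderiv ℝ (fun q ↦ q.1 * fderiv ℝ v q (1, 0)) p (1, 0))
        + d * (p.1 * fderiv ℝ v p (1, 0))
        + p.1 ^ 2 * ∑ j, fderiv ℝ (fun q ↦ fderiv ℝ v q (0, b j)) p (0, b j) - lam * v p := by
  have hcoe (e : ℝ × Y) : ⇑(zeroDeriv e v) = fun q ↦ (q.1 : ℂ) * fderiv ℝ v q e :=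
    funext (zeroDeriv_apply e v)
  have hcoe_lineDeriv (e : ℝ × Y) : ⇑(∂_{e} v : 𝓓(halfSpace Y, ℂ)) = fun q ↦ fderiv ℝ v q e :=
    funext (lineDerivOp_apply e v)
  have htangential (y : Y) : zeroDeriv (0, y) (zeroDeriv (0, y) v) p
      = p.1 ^ 2 * fderiv ℝ (fun q ↦ fderiv ℝ v q (0, y)) p (0, y) := by
    rw [zeroDeriv_zeroDeriv, Complex.ofReal_zero, zero_smul, add_zero, rpowMul_apply,
      lineDerivOp_apply, hcoe_lineDeriv, Real.rpow_ofNat, Complex.real_smul, Complex.ofReal_pow]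
  simp [kleinGordon, pow_two, zeroDeriv_apply, hcoe, htangential, Finset.mul_sum]

variable [MeasurableSpace Y] [BorelSpace Y]

theorem inner_toL2_rpowMul_left (μ : Measure (ℝ × Y)) [IsFiniteMeasureOnCompacts μ] (r : ℝ)
    (v w : 𝓓(halfSpace Y, ℂ)) :
    ⟪toL2 μ (rpowMul r v), toL2 μ w⟫_ℂ = ⟪toL2 μ v, toL2 μ (rpowMul r w)⟫_ℂ := by
  rw [inner_toL2, inner_toL2]
  congr 1 with p
  simp only [rpowMul_apply, Complex.real_smul, map_mul, Complex.conj_ofReal]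
  ring

/-- The shift by `e.1 / 2` is half of the divergence of `x ∂_e`. -/
theorem isSkewFor_zeroDeriv_add [FiniteDimensional ℝ Y] (μ : Measure (ℝ × Y))
    [μ.IsAddHaarMeasure] (e : ℝ × Y) :
    IsSkewFor (toL2 μ) (zeroDeriv e + ((e.1 / 2 : ℝ) : ℂ) • 1) := by
  intro v w
  have hzero : ⟪toL2 μ (zeroDeriv e v), toL2 μ w⟫_ℂ
      = -⟪toL2 μ v, toL2 μ (zeroDeriv e w + (e.1 : ℂ) • w)⟫_ℂ := by
    rw [zeroDeriv_eq, inner_toL2_rpowMul_left]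
    refine (isSkewFor_lineDerivOp μ e v (rpowMul 1 w)).trans ?_
    rw [ContinuousLinearMap.coe_coe, lineDerivOpCLM_apply, lineDerivOp_rpowMul, sub_self,
      rpowMul_zero, one_mul, zeroDeriv_eq]
  simp only [LinearMap.add_apply, LinearMap.smul_apply, Module.End.one_apply, map_add, map_smul,
    inner_add_left, inner_add_right, inner_smul_left, inner_smul_right, hzero,
    Complex.conj_ofReal]
  push_cast
  ring

theorem isSkewFor_scalingGenerator [FiniteDimensional ℝ Y] (μ : Measure (ℝ × Y))
    [μ.IsAddHaarMeasure] : IsSkewFor (toL2 μ) (scalingGenerator Y) :=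
  isSkewFor_zeroDeriv_add μ (1, 0)

theorem isSkewFor_zeroDeriv_tangential [FiniteDimensional ℝ Y] (μ : Measure (ℝ × Y))
    [μ.IsAddHaarMeasure] (y : Y) : IsSkewFor (toL2 μ) (zeroDeriv ((0, y) : ℝ × Y)) := by
  simpa using isSkewFor_zeroDeriv_add μ (0, y)

theorem inner_toL2_rpowMul_toLp {μ : Measure (ℝ × Y)} [IsFiniteMeasureOnCompacts μ] (r : ℝ) {t : ℝ}
    {g : ℝ × Y → ℂ} (hg : MemLp (fun p ↦ p.1 ^ t • g p) 2 (μ.restrict (halfSpace Y)))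
    (v : 𝓓(halfSpace Y, ℂ)) :
    ⟪toL2 μ (rpowMul r v), hg.toLp _⟫_ℂ
      = ∫ p in halfSpace Y, g p * conj (v p) * ((p.1 ^ (r + t) : ℝ) : ℂ) ∂μ := by
  rw [toL2, LinearMap.coe_mk, AddHom.coe_mk, inner_toLp_toLp]
  refine setIntegral_congr_fun (halfSpace Y).isOpen.measurableSet fun p hp ↦ ?_
  simp only [rpowMul_apply, Complex.real_smul, map_mul, Complex.conj_ofReal, Real.rpow_add hp.1,
    Complex.ofReal_mul]
  ring

theorem exists_norm_rpowMul_le_kleinGordon [FiniteDimensional ℝ Y] (μ : Measure (ℝ × Y))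
    [μ.IsAddHaarMeasure] (b : J → Y) {d lam l : ℝ}
    (h : IsAdmissibleWeight ((d / 2) ^ 2 - lam) l) :
    ∃ C, ∀ v, ‖toL2 μ (rpowMul (l - (d + 1) / 2) v)‖
      ≤ C * ‖toL2 μ (rpowMul (l - (d + 1) / 2) (kleinGordon b d lam v))‖ := by
  obtain ⟨C, hC⟩ := exists_norm_le_conjugatedOp (isSkewFor_scalingGenerator μ)
    (fun j ↦ isSkewFor_zeroDeriv_tangential μ (b j))
    (fun j ↦ lie_scalingGenerator_zeroDeriv (b j)) h
  refine ⟨C, fun v ↦ ?_⟩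
  have hconj : rpowMul (l - (d + 1) / 2) (kleinGordon b d lam v) = _ :=
    LinearMap.congr_fun (semiconjBy_rpowMul_kleinGordon b d lam l) v
  rw [hconj]
  exact hC _

theorem exists_weak_solution_kleinGordon [FiniteDimensional ℝ Y] (μ : Measure (ℝ × Y))
    [μ.IsAddHaarMeasure] (b : J → Y) {d lam l : ℝ}
    (h : IsAdmissibleWeight ((d / 2) ^ 2 - lam) l) {f : ℝ × Y → ℂ} (hf : Measurable f)
    (hfL2 : ∫⁻ p in halfSpace Y,
      ENNReal.ofReal (p.1 ^ (-2 * l - (d + 1)) * ‖f p‖ ^ 2) ∂μ < ⊤) :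
    ∃ u : ℝ × Y → ℂ, Measurable u ∧
      ∫⁻ p in halfSpace Y, ENNReal.ofReal (p.1 ^ (-2 * l - (d + 1)) * ‖u p‖ ^ 2) ∂μ < ⊤ ∧
      ∀ v : 𝓓(halfSpace Y, ℂ),
        ∫ p in halfSpace Y,
            u p * conj (kleinGordon b d lam v p) * ((p.1 ^ (-(d + 1)) : ℝ) : ℂ) ∂μ
          = ∫ p in halfSpace Y, f p * conj (v p) * ((p.1 ^ (-(d + 1)) : ℝ) : ℂ) ∂μ := by
  set r := l - (d + 1) / 2 with hr
  set t := -l - (d + 1) / 2 with ht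
  have hweight : -2 * l - (d + 1) = 2 * t := by rw [ht]; ring
  have hpair : -(d + 1) = r + t := by rw [hr, ht]; ring
  rw [hweight, ← memLp_rpow_smul_iff μ t hf] at hfL2
  obtain ⟨U, hU⟩ := exists_forall_inner_eq_of_norm_le
    (A := toL2 μ ∘ₗ rpowMul r ∘ₗ kleinGordon b d lam) (B := toL2 μ ∘ₗ rpowMul r)
    (exists_norm_rpowMul_le_kleinGordon μ b h) (hfL2.toLp _)
  obtain ⟨u, hu, huL2, rfl⟩ := exists_measurable_toLp_rpow_smul_eq t U
  refine ⟨u, hu, by rwa [hweight, ← memLp_rpow_smul_iff μ t hu], fun v ↦ ?_⟩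
  simp only [hpair, ← inner_toL2_rpowMul_toLp r huL2, ← inner_toL2_rpowMul_toLp r hfL2]
  exact hU v

end HalfSpace

theorem kleinGordon_eq_Pmodel (n : ℕ) (lam : ℝ) (v : 𝓓(halfSpace (Fin (n - 1) → ℝ), ℂ))
    (p : ℝ × (Fin (n - 1) → ℝ)) :
    kleinGordon (fun j ↦ Pi.single j 1) ((n : ℝ) - 1) lam v p = Pmodel n lam v p := by
  rw [kleinGordon_apply, Complex.ofReal_sub, Complex.ofReal_natCast, Complex.ofReal_one]
  rfl

end KleinGordon

/-- weighted `L²` solvability of `P u = f` in the distributional sense: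
if `l < −max(1/2, l(λ))`, or `l > −min(1/2, l(λ))` and `l ≠ l(λ)`, then for every
measurable `f` with `∫∫ x^{−2l−n} |f|² < ∞` there is a measurable `u` with
`∫∫ x^{−2l−n} |u|² < ∞` such that `∫∫ u · conj(P v) · x^{−n} = ∫∫ f · conj(v) · x^{−n}`
for all smooth compactly supported test functions `v` on `(0,∞) × ℝ^{n−1}`. -/
theorem stmt6 (n : ℕ) (hn : 2 ≤ n) (lam : ℝ) (lΛ : ℝ)
    (hlΛ : lΛ = Real.sqrt (max (((((n : ℝ) - 1) / 2) ^ 2) - lam) 0))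
    (l : ℝ)
    (hl : l < -max (1 / 2) lΛ ∨ (-min (1 / 2) lΛ < l ∧ l ≠ lΛ))
    (f : ℝ × (Fin (n - 1) → ℝ) → ℂ) (hf : Measurable f)
    (hfL2 : ∫⁻ p in Set.Ioi (0 : ℝ) ×ˢ (Set.univ : Set (Fin (n - 1) → ℝ)),
        ENNReal.ofReal (p.1 ^ (-2 * l - (n : ℝ)) * ‖f p‖ ^ 2) < ⊤) :
    ∃ u : ℝ × (Fin (n - 1) → ℝ) → ℂ, Measurable u ∧
      (∫⁻ p in Set.Ioi (0 : ℝ) ×ˢ (Set.univ : Set (Fin (n - 1) → ℝ)),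
          ENNReal.ofReal (p.1 ^ (-2 * l - (n : ℝ)) * ‖u p‖ ^ 2) < ⊤) ∧
      ∀ v : ℝ × (Fin (n - 1) → ℝ) → ℂ,
        ContDiff ℝ (⊤ : ℕ∞) v → HasCompactSupport v →
        tsupport v ⊆ {p : ℝ × (Fin (n - 1) → ℝ) | 0 < p.1} →
        (∫ p in Set.Ioi (0 : ℝ) ×ˢ (Set.univ : Set (Fin (n - 1) → ℝ)),
            u p * (starRingEnd ℂ) (Pmodel n (lam : ℂ) v p) * ((p.1 ^ (-(n : ℝ)) : ℝ) : ℂ))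
          = ∫ p in Set.Ioi (0 : ℝ) ×ˢ (Set.univ : Set (Fin (n - 1) → ℝ)),
              f p * (starRingEnd ℂ) (v p) * ((p.1 ^ (-(n : ℝ)) : ℝ) : ℂ) := by
  subst hlΛ
  have : (volume : Measure (ℝ × (Fin (n - 1) → ℝ))).IsAddHaarMeasure := by
    rw [Measure.volume_eq_prod]
    infer_instance
  have hdim : (n : ℝ) = (n : ℝ) - 1 + 1 := (sub_add_cancel _ _).symm
  rw [hdim] at hfL2 ⊢
  obtain ⟨u, hu, huL2, hweak⟩ := KleinGordon.exists_weak_solution_kleinGordon volume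
    (fun j ↦ Pi.single j 1) (KleinGordon.isAdmissibleWeight_of_lt_or_lt hl) hf hfL2
  refine ⟨u, hu, huL2, fun v hv hv_compact hv_supp ↦ ?_⟩
  have hweak_v := hweak ⟨v, hv, hv_compact, fun p hp ↦ ⟨hv_supp hp, Set.mem_univ _⟩⟩
  simp only [KleinGordon.kleinGordon_eq_Pmodel] at hweak_v
  exact hweak_v
end

section
/- Let n ≥ 2 be an integer, s ∈ ℂ with Re s > −1, and φ : ℝ^{n−1} → ℂ smooth with compact support. Define v(x,y) = ∫_{{|Y| ≤ 1}} (1 − |Y|²)^s φ(y − xY) dY. Then: (i) v is smooth on ℝ × ℝ^{n−1}; (ii) for every x > 0 and y, v(x,y) = x^{−(n−1)} ∫_{ℝ^{n−1}} g_s(1 − |y−y′|²/x²) φ(y′) dy′, where g_s(t) = t^s for t > 0 and g_s(t) = 0 for t ≤ 0; (iii) v(0,y) = (π^{(n−1)/2} Γ(s+1)/Γ(s+(n+1)/2)) · φ(y) for every y. -/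
open MeasureTheory

/-!
The weight `(1 - |Y|²)₊ˢ` is integrable with compact support, so `v` is the integral of a smooth
function of `(p, Y)` against a fixed integrable compactly supported weight, and such integrals are
smooth in the parameter: after inserting a cutoff they are convolutions evaluated at `0`.
Substituting `y' = y - x Y` gives the formula for `x > 0`. At `x = 0` what is left is the
total mass of the weight, which the substitution `t = |Y|²` turns into the Beta integral
`B(d / 2, s + 1)`, where `d = n - 1`.
-/

open Set Metric Module
open scoped Real

/-- The truncated complex power `t₊ˢ`: equal to `tˢ` for `t > 0` and to `0` for `t ≤ 0`. It extends
the weight `(1 - |Y|²)ˢ` by zero from the open unit ball to the whole space. -/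
noncomputable def posPartCpow (s : ℂ) (t : ℝ) : ℂ := if 0 < t then (t : ℂ) ^ s else 0

lemma posPartCpow_of_pos (s : ℂ) {t : ℝ} (ht : 0 < t) : posPartCpow s t = (t : ℂ) ^ s :=
  if_pos ht

lemma posPartCpow_of_nonpos (s : ℂ) {t : ℝ} (ht : t ≤ 0) : posPartCpow s t = 0 :=
  if_neg ht.not_gt

section BetaIntegral

lemma rpow_smul_posPartCpow_one_sub_eqOn_indicator (a : ℝ) (s : ℂ) :
    EqOn (fun t : ℝ ↦ t ^ (a - 1) • posPartCpow s (1 - t))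
      ((Ioo 0 1).indicator fun t : ℝ ↦ (t : ℂ) ^ ((a : ℂ) - 1) * (1 - (t : ℂ)) ^ (s + 1 - 1))
      (Ioi 0) := by
  intro t (ht : 0 < t)
  rcases lt_or_ge t 1 with h | h
  · rw [indicator_of_mem (mem_Ioo.2 ⟨ht, h⟩)]
    simp [posPartCpow_of_pos s (sub_pos.2 h), Complex.ofReal_cpow ht.le]
  · rw [indicator_of_notMem fun hmem ↦ h.not_gt hmem.2]
    simp [posPartCpow_of_nonpos s (sub_nonpos.2 h)]

lemma integrableOn_rpow_smul_posPartCpow_one_sub {a : ℝ} (ha : 0 < a) {s : ℂ} (hs : -1 < s.re) :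
    IntegrableOn (fun t : ℝ ↦ t ^ (a - 1) • posPartCpow s (1 - t)) (Ioi 0) := by
  have hs' : 0 < (s + 1).re := by rw [Complex.add_re, Complex.one_re]; linarith
  have hconv := Complex.betaIntegral_convergent (u := a) ha hs'
  rw [intervalIntegrable_iff_integrableOn_Ioo_of_le zero_le_one] at hconv
  rw [integrableOn_congr_fun (rpow_smul_posPartCpow_one_sub_eqOn_indicator a s) measurableSet_Ioi]
  exact (hconv.integrable_indicator measurableSet_Ioo).integrableOn

lemma integral_rpow_smul_posPartCpow_one_sub (a : ℝ) (s : ℂ) :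
    ∫ t in Ioi (0 : ℝ), t ^ (a - 1) • posPartCpow s (1 - t) =
      Complex.betaIntegral a (s + 1) := by
  rw [setIntegral_congr_fun measurableSet_Ioi (rpow_smul_posPartCpow_one_sub_eqOn_indicator a s),
    setIntegral_indicator measurableSet_Ioo, inter_eq_right.2 Ioo_subset_Ioi_self,
    Complex.betaIntegral, intervalIntegral.integral_of_le zero_le_one, integral_Ioc_eq_integral_Ioo]

end BetaIntegral

section NormSq

lemma finrank_div_two_pos (E : Type*) [AddCommGroup E] [Module ℝ E] [FiniteDimensional ℝ E]
    [Nontrivial E] : 0 < (finrank ℝ E : ℝ) / 2 :=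
  half_pos (Nat.cast_pos.2 finrank_pos)

variable {E F : Type*} [NormedAddCommGroup E] [InnerProductSpace ℝ E] [FiniteDimensional ℝ E]
  [MeasurableSpace E] [BorelSpace E] [Nontrivial E] [NormedAddCommGroup F] [NormedSpace ℝ F]

lemma volume_real_ball_zero_one :
    volume.real (ball (0 : E) 1) =
      π ^ ((finrank ℝ E : ℝ) / 2) / Real.Gamma (finrank ℝ E / 2 + 1) := by
  have hGamma : 0 < Real.Gamma (finrank ℝ E / 2 + 1) := Real.Gamma_pos_of_pos (by positivity)
  have hpow : √π ^ finrank ℝ E = π ^ ((finrank ℝ E : ℝ) / 2) := by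
    rw [Real.sqrt_eq_rpow, ← Real.rpow_natCast, ← Real.rpow_mul Real.pi_nonneg]
    ring_nf
  rw [Measure.real, InnerProductSpace.volume_ball, hpow, ENNReal.ofReal_one, one_pow, one_mul,
    ENNReal.toReal_ofReal (div_pos (by positivity) hGamma).le]

lemma pow_pred_smul_comp_sq_eq {d : ℕ} (hd : d ≠ 0) (g : ℝ → F) {r : ℝ} (hr : 0 < r) :
    r ^ (d - 1) • g (r ^ 2) =
      r ^ ((2 : ℝ) - 1) • (r ^ (2 : ℝ)) ^ ((d : ℝ) / 2 - 1) • g (r ^ (2 : ℝ)) := by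
  rw [smul_smul, ← Real.rpow_mul hr.le, ← Real.rpow_add hr, Real.rpow_two, ← Real.rpow_natCast,
    Nat.cast_pred (Nat.pos_of_ne_zero hd)]
  ring_nf

lemma integrable_comp_norm_sq_iff (g : ℝ → F) :
    Integrable (fun Y : E ↦ g (‖Y‖ ^ 2)) ↔
      IntegrableOn (fun t : ℝ ↦ t ^ ((finrank ℝ E : ℝ) / 2 - 1) • g t) (Ioi 0) := by
  rw [integrable_fun_norm_addHaar volume (f := fun r ↦ g (r ^ 2)),
    ← integrableOn_Ioi_comp_rpow_iff'
      (fun t : ℝ ↦ t ^ ((finrank ℝ E : ℝ) / 2 - 1) • g t) two_ne_zero]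
  exact integrableOn_congr_fun (fun r hr ↦ pow_pred_smul_comp_sq_eq finrank_pos.ne' g hr)
    measurableSet_Ioi

lemma integral_comp_norm_sq (g : ℝ → F) :
    ∫ Y : E, g (‖Y‖ ^ 2) =
      (π ^ ((finrank ℝ E : ℝ) / 2) / Real.Gamma (finrank ℝ E / 2)) •
        ∫ t in Ioi (0 : ℝ), t ^ ((finrank ℝ E : ℝ) / 2 - 1) • g t := by
  have hdim : (finrank ℝ E : ℝ) ≠ 0 := Nat.cast_ne_zero.2 finrank_pos.ne'
  have hd := finrank_div_two_pos E
  have hGamma : Real.Gamma (finrank ℝ E / 2) ≠ 0 := (Real.Gamma_pos_of_pos hd).ne'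
  rw [integral_fun_norm_addHaar volume (fun r ↦ g (r ^ 2)),
    setIntegral_congr_fun measurableSet_Ioi
      fun r hr ↦ pow_pred_smul_comp_sq_eq finrank_pos.ne' g hr,
    ← integral_comp_rpow_Ioi_of_pos
      (g := fun t : ℝ ↦ t ^ ((finrank ℝ E : ℝ) / 2 - 1) • g t) two_pos, volume_real_ball_zero_one,
    Real.Gamma_add_one hd.ne']
  simp only [mul_smul (2 : ℝ)]
  rw [integral_smul, ← Nat.cast_smul_eq_nsmul ℝ, smul_smul, smul_smul]
  congr 1
  field_simp

lemma integrable_posPartCpow_one_sub_norm_sq {s : ℂ} (hs : -1 < s.re) :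
    Integrable fun Y : E ↦ posPartCpow s (1 - ‖Y‖ ^ 2) :=
  (integrable_comp_norm_sq_iff fun t ↦ posPartCpow s (1 - t)).2 <|
    integrableOn_rpow_smul_posPartCpow_one_sub (finrank_div_two_pos E) hs

lemma integral_posPartCpow_one_sub_norm_sq {s : ℂ} (hs : -1 < s.re) :
    ∫ Y : E, posPartCpow s (1 - ‖Y‖ ^ 2) =
      (π : ℂ) ^ ((finrank ℝ E : ℂ) / 2) * Complex.Gamma (s + 1) /
        Complex.Gamma (finrank ℝ E / 2 + (s + 1)) := by
  have hd : 0 < ((finrank ℝ E : ℂ) / 2).re := by simpa using finrank_div_two_pos E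
  have hs' : 0 < (s + 1).re := by rw [Complex.add_re, Complex.one_re]; linarith
  have hΓd := Complex.Gamma_ne_zero_of_re_pos hd
  have hΓsum : Complex.Gamma (finrank ℝ E / 2 + (s + 1)) ≠ 0 :=
    Complex.Gamma_ne_zero_of_re_pos (by rw [Complex.add_re]; exact add_pos hd hs')
  have hBeta := Complex.Gamma_mul_Gamma_eq_betaIntegral hd hs'
  rw [integral_comp_norm_sq fun t ↦ posPartCpow s (1 - t), integral_rpow_smul_posPartCpow_one_sub,
    Complex.real_smul, Complex.ofReal_div, Complex.ofReal_cpow Real.pi_nonneg,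
    ← Complex.Gamma_ofReal]
  push_cast
  rw [div_mul_eq_mul_div, div_eq_div_iff hΓd hΓsum]
  linear_combination -(π : ℂ) ^ ((finrank ℝ E : ℂ) / 2) * hBeta

end NormSq

section SumSq

variable {ι : Type*} [Fintype ι]

lemma norm_toLp_two_sq (Y : ι → ℝ) : ‖WithLp.toLp 2 Y‖ ^ 2 = ∑ j, Y j ^ 2 :=
  EuclideanSpace.real_norm_sq_eq _

lemma hasCompactSupport_posPartCpow_one_sub_sum_sq (s : ℂ) :
    HasCompactSupport fun Y : ι → ℝ ↦ posPartCpow s (1 - ∑ j, Y j ^ 2) := by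
  refine HasCompactSupport.intro (isCompact_closedBall 0 1) fun Y hY ↦ ?_
  rw [mem_closedBall_zero_iff, pi_norm_le_iff_of_nonneg zero_le_one] at hY
  push Not at hY
  obtain ⟨i, hi⟩ := hY
  have hYi : 1 ≤ Y i ^ 2 := (one_le_sq_iff_one_le_abs _).2 hi.le
  have hsum : Y i ^ 2 ≤ ∑ j, Y j ^ 2 :=
    Finset.single_le_sum (fun j _ ↦ sq_nonneg (Y j)) (Finset.mem_univ i)
  exact posPartCpow_of_nonpos s (by linarith)

variable [Nonempty ι]

lemma integrable_posPartCpow_one_sub_sum_sq {s : ℂ} (hs : -1 < s.re) :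
    Integrable fun Y : ι → ℝ ↦ posPartCpow s (1 - ∑ j, Y j ^ 2) := by
  simp only [← norm_toLp_two_sq]
  exact (PiLp.volume_preserving_toLp ι).integrable_comp_of_integrable
    (integrable_posPartCpow_one_sub_norm_sq hs)

lemma integral_posPartCpow_one_sub_sum_sq {s : ℂ} (hs : -1 < s.re) :
    ∫ Y : ι → ℝ, posPartCpow s (1 - ∑ j, Y j ^ 2) =
      (π : ℂ) ^ ((Fintype.card ι : ℂ) / 2) * Complex.Gamma (s + 1) /
        Complex.Gamma (Fintype.card ι / 2 + (s + 1)) := by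
  simp only [← norm_toLp_two_sq]
  rw [(PiLp.volume_preserving_toLp ι).integral_comp
      (MeasurableEquiv.toLp 2 (ι → ℝ)).measurableEmbedding
      fun Z : EuclideanSpace ℝ ι ↦ posPartCpow s (1 - ‖Z‖ ^ 2),
    integral_posPartCpow_one_sub_norm_sq hs, finrank_euclideanSpace]

lemma ae_sum_sq_ne (c : ℝ) : ∀ᵐ Y : ι → ℝ, ∑ j, Y j ^ 2 ≠ c := by
  have hsphere : ∀ᵐ Z : EuclideanSpace ℝ ι, Z ∉ sphere 0 √c :=
    measure_eq_zero_iff_ae_notMem.1 (Measure.addHaar_sphere _ (0 : EuclideanSpace ℝ ι) √c)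
  filter_upwards [(PiLp.volume_preserving_toLp ι).quasiMeasurePreserving.ae hsphere] with Y hY hc
  refine hY (mem_sphere_zero_iff_norm.2 ?_)
  rw [← hc, ← norm_toLp_two_sq, Real.sqrt_sq (norm_nonneg _)]

-- The power is `1` on the unit sphere when `s = 0`, so the two integrands agree only a.e.
lemma setIntegral_one_sub_sum_sq_cpow_smul {F : Type*} [NormedAddCommGroup F] [NormedSpace ℂ F]
    (s : ℂ) (ψ : (ι → ℝ) → F) :
    ∫ Y in {Y : ι → ℝ | ∑ j, Y j ^ 2 ≤ 1}, ((1 - ∑ j, Y j ^ 2 : ℝ) : ℂ) ^ s • ψ Y =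
      ∫ Y, posPartCpow s (1 - ∑ j, Y j ^ 2) • ψ Y := by
  have hmeas : MeasurableSet {Y : ι → ℝ | ∑ j, Y j ^ 2 ≤ 1} :=
    measurableSet_le (by fun_prop) measurable_const
  rw [← integral_indicator hmeas]
  refine integral_congr_ae ?_
  filter_upwards [ae_sum_sq_ne 1] with Y hY
  rcases hY.lt_or_gt with hlt | hgt
  · simp [indicator, hlt.le, posPartCpow_of_pos s (sub_pos.2 hlt)]
  · simp [indicator, hgt.not_ge, posPartCpow_of_nonpos s (sub_nonpos.2 hgt.le)]

end SumSq

section WeightedIntegrals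

variable {E F : Type*} [NormedAddCommGroup E] [NormedSpace ℝ E] [FiniteDimensional ℝ E]

lemma exists_contDiff_hasCompactSupport_eq_one_on {K : Set E} (hK : IsCompact K) :
    ∃ χ : E → ℝ, ContDiff ℝ (⊤ : ℕ∞) χ ∧ HasCompactSupport χ ∧ ∀ Y ∈ K, χ Y = 1 := by
  obtain ⟨R, hR, hKR⟩ := hK.isBounded.subset_closedBall_lt 0 0
  let χ : ContDiffBump (0 : E) := ⟨R, R + 1, hR, lt_add_one R⟩
  exact ⟨χ, χ.contDiff, χ.hasCompactSupport, fun Y hY ↦ χ.one_of_mem_closedBall (hKR hY)⟩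

variable [MeasurableSpace E] [BorelSpace E] {μ : Measure E} [NormedAddCommGroup F]
  [NormedSpace ℂ F]

lemma contDiff_integral_smul_of_hasCompactSupport {P : Type*} [NormedAddCommGroup P]
    [NormedSpace ℝ P] {f : E → ℂ} (hf : LocallyIntegrable f μ) (hfc : HasCompactSupport f)
    {k : ℕ∞} {g : P × E → F} (hg : ContDiff ℝ k g) :
    ContDiff ℝ k fun p ↦ ∫ Y, f Y • g (p, Y) ∂μ := by
  obtain ⟨χ, hχ, hχc, hχ_one⟩ := exists_contDiff_hasCompactSupport_eq_one_on hfc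
  -- The convolution of `f` with `gχ p` takes the value `∫ f Y • χ Y • g (p, Y)` at `0`.
  let gχ : P → E → F := fun p z ↦ χ (-z) • g (p, -z)
  have hgχ : ContDiff ℝ k ↿gχ := by
    have hχ' : ContDiff ℝ k χ := hχ.of_le (mod_cast le_top)
    exact (hχ'.comp contDiff_snd.neg).smul (hg.comp (contDiff_fst.prodMk contDiff_snd.neg))
  have hgχ_zero : ∀ p z, p ∈ univ → z ∉ -tsupport χ → gχ p z = 0 := fun p z _ hz ↦ by
    simp only [gχ, image_eq_zero_of_notMem_tsupport (f := χ) (x := -z) hz, zero_smul]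
  have hconv := contDiffOn_convolution_right_with_param_comp (μ := μ)
    (ContinuousLinearMap.lsmul ℝ ℂ) (contDiffOn_const (c := (0 : E))) isOpen_univ
    hχc.isCompact.neg hgχ_zero hf hgχ.contDiffOn
  rw [contDiffOn_univ] at hconv
  convert hconv using 2 with p
  refine integral_congr_ae (.of_forall fun Y ↦ ?_)
  by_cases hY : Y ∈ tsupport f
  · simp [gχ, hχ_one Y hY]
  · simp [image_eq_zero_of_notMem_tsupport hY]

lemma integral_smul_comp_sub_smul [μ.IsAddHaarMeasure] (f : E → ℂ) (φ : E → F) {x : ℝ}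
    (hx : x ≠ 0) (y : E) :
    ∫ Y, f Y • φ (y - x • Y) ∂μ =
      |(x ^ finrank ℝ E)⁻¹| • ∫ y', f (x⁻¹ • (y - y')) • φ y' ∂μ := by
  rw [← integral_sub_left_eq_self (fun y' ↦ f (x⁻¹ • (y - y')) • φ y') μ y,
    ← Measure.integral_comp_smul]
  simp only [sub_sub_cancel, inv_smul_smul₀ hx]

end WeightedIntegrals

theorem stmt10_general {ι F : Type*} [Fintype ι] [Nonempty ι] [NormedAddCommGroup F]
    [NormedSpace ℂ F] [CompleteSpace F] (n : ℕ) (hn : n = Fintype.card ι + 1)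
    (s : ℂ) (hs : -1 < s.re) {k : ℕ∞} (φ : (ι → ℝ) → F) (hφ : ContDiff ℝ k φ)
    (v : ℝ × (ι → ℝ) → F)
    (hv : v = fun p ↦ ∫ Y in {Y : ι → ℝ | ∑ j, Y j ^ 2 ≤ 1},
      ((1 - ∑ j, Y j ^ 2 : ℝ) : ℂ) ^ s • φ (p.2 - p.1 • Y)) :
    ContDiff ℝ k v ∧
    (∀ x : ℝ, 0 < x → ∀ y : ι → ℝ,
      v (x, y) = ((x ^ (-((n : ℝ) - 1)) : ℝ) : ℂ) •
        ∫ y' : ι → ℝ,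
          (if 0 < 1 - (∑ j, (y j - y' j) ^ 2) / x ^ 2 then
              ((1 - (∑ j, (y j - y' j) ^ 2) / x ^ 2 : ℝ) : ℂ) ^ s
            else 0) • φ y') ∧
    (∀ y : ι → ℝ,
      v (0, y) = ((π : ℂ) ^ (((n : ℂ) - 1) / 2) * Complex.Gamma (s + 1)
          / Complex.Gamma (s + ((n : ℂ) + 1) / 2)) • φ y) := by
  replace hv (p) : v p = ∫ Y, posPartCpow s (1 - ∑ j, Y j ^ 2) • φ (p.2 - p.1 • Y) := by
    rw [hv, ← setIntegral_one_sub_sum_sq_cpow_smul]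
  subst hn
  refine ⟨?_, fun x hx y ↦ ?_, fun y ↦ ?_⟩
  · rw [funext hv]
    exact contDiff_integral_smul_of_hasCompactSupport
      (integrable_posPartCpow_one_sub_sum_sq hs).locallyIntegrable
      (hasCompactSupport_posPartCpow_one_sub_sum_sq s)
      (g := fun q : (ℝ × (ι → ℝ)) × (ι → ℝ) ↦ φ (q.1.2 - q.1.1 • q.2)) (hφ.comp (by fun_prop))
  · have hscale : |(x ^ finrank ℝ (ι → ℝ))⁻¹| = x ^ (-(((Fintype.card ι + 1 : ℕ) : ℝ) - 1)) := by
      rw [abs_of_pos (by positivity), finrank_fintype_fun_eq_card, Nat.cast_succ,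
        add_sub_cancel_right, Real.rpow_neg hx.le, Real.rpow_natCast]
    have hsum (y' : ι → ℝ) : ∑ j, (x⁻¹ • (y - y')) j ^ 2 = (∑ j, (y j - y' j) ^ 2) / x ^ 2 := by
      simp [mul_pow, ← Finset.mul_sum, div_eq_inv_mul]
    rw [hv, integral_smul_comp_sub_smul _ φ hx.ne', hscale, Complex.coe_smul]
    simp only [hsum, posPartCpow]
  · rw [hv]
    simp only [zero_smul, sub_zero]
    rw [integral_smul_const, integral_posPartCpow_one_sub_sum_sq hs]
    push_cast
    ring_nf

/-- for `n ≥ 2`, `Re s > −1` and `φ : ℝ^{n−1} → ℂ` smooth with compact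
support, the function `v(x,y) = ∫_{|Y|≤1} (1−|Y|²)^s φ(y − xY) dY` is (i) smooth on
`ℝ × ℝ^{n−1}`; (ii) for `x > 0` it equals
`x^{−(n−1)} ∫ g_s(1 − |y−y′|²/x²) φ(y′) dy′` with `g_s(t) = t^s` for `t > 0`, `0` else;
and (iii) `v(0,y) = (π^{(n−1)/2} Γ(s+1)/Γ(s+(n+1)/2)) φ(y)`. -/
theorem stmt10 (n : ℕ) (hn : 2 ≤ n) (s : ℂ) (hs : -1 < s.re)
    (φ : (Fin (n - 1) → ℝ) → ℂ) (hφ : ContDiff ℝ (⊤ : ℕ∞) φ)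
    (hφc : HasCompactSupport φ)
    (v : ℝ × (Fin (n - 1) → ℝ) → ℂ)
    (hv : v = fun p => ∫ Y in {Y : Fin (n - 1) → ℝ | ∑ j, (Y j) ^ 2 ≤ 1},
      (((1 - ∑ j, (Y j) ^ 2 : ℝ)) : ℂ) ^ s * φ (p.2 - p.1 • Y)) :
    ContDiff ℝ (⊤ : ℕ∞) v ∧
    (∀ x : ℝ, 0 < x → ∀ y : Fin (n - 1) → ℝ,
      v (x, y) = ((x ^ (-((n : ℝ) - 1)) : ℝ) : ℂ) *
        ∫ y' : Fin (n - 1) → ℝ,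
          (if 0 < 1 - (∑ j, (y j - y' j) ^ 2) / x ^ 2 then
              (((1 - (∑ j, (y j - y' j) ^ 2) / x ^ 2 : ℝ)) : ℂ) ^ s
            else 0) * φ y') ∧
    (∀ y : Fin (n - 1) → ℝ,
      v (0, y) = (Real.pi : ℂ) ^ (((n : ℂ) - 1) / 2) * Complex.Gamma (s + 1)
          / Complex.Gamma (s + ((n : ℂ) + 1) / 2) * φ y) := by
  have : Nonempty (Fin (n - 1)) := ⟨⟨0, by omega⟩⟩
  exact stmt10_general n (by rw [Fintype.card_fin]; omega) s hs φ hφ v hv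
end

section
/- Let n ≥ 2 be an integer and λ, σ ∈ ℂ, and let B = {Y ∈ ℝ^{n−1} : |Y| < 1}. Assume that σ+2 is injective for P in the following sense: for every smooth w : ℝ^{n−1} → ℂ, if P_{σ+2}((1−|Y|²)^{σ+2} w) = 0 at every point of B, then w vanishes on B. Then for every smooth v : ℝ^{n−1} → ℂ such that P_σ((1−|Y|²)^σ v) = 0 at every point of B, either v vanishes on B, or ŝ₊(λ) − σ is a nonnegative integer, or ŝ₋(λ) − σ is a nonnegative integer. -/
/-- `∂ⱼ` on functions on `ℝ^m`. -/
noncomputable def pd {m : ℕ} (j : Fin m) (u : (Fin m → ℝ) → ℂ) (Y : Fin m → ℝ) : ℂ :=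
  fderiv ℝ u Y (Pi.single j 1)

/-- The Euler vector field `E u (Y) = Σⱼ Yⱼ ∂ⱼ u (Y)`. -/
noncomputable def euler {m : ℕ} (u : (Fin m → ℝ) → ℂ) (Y : Fin m → ℝ) : ℂ :=
  ∑ j, (Y j : ℂ) * pd j u Y

/-- The Euclidean Laplacian `Δ u = Σⱼ ∂ⱼ² u`. -/
noncomputable def lap {m : ℕ} (u : (Fin m → ℝ) → ℂ) (Y : Fin m → ℝ) : ℂ :=
  ∑ j, pd j (pd j u) Y

/-- The normal operator family `P_σ u = −(E + (n−1−σ))((E − σ)u) + Δ_Y u − λ u`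
acting on functions on `ℝ^{n−1}` (the real form of
`(YD_Y − i(n−1−σ))(YD_Y + iσ) − Δ_Y − λ`). -/
noncomputable def Pop (n : ℕ) (lam σ : ℂ) (u : (Fin (n - 1) → ℝ) → ℂ)
    (Y : Fin (n - 1) → ℝ) : ℂ :=
  -(euler (fun Z => euler u Z - σ * u Z) Y
      + ((n : ℂ) - 1 - σ) * (euler u Y - σ * u Y))
    + lap u Y - lam * u Y

/-!
Conjugating by `ν^{2s}`, where `ν² = 1 - |Y|²`, turns `P_s` into `P_{-s}`, so the injectivity
condition at `s` says that smooth solutions of `P_{-s} w = 0` on the ball vanish there. Since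
`[∂ⱼ, E] = ∂ⱼ`, one has `∂ⱼ P_{-s} = P_{-(s+1)} ∂ⱼ`: if injectivity holds at `s + 1`, all first
derivatives of a solution `v` at `s` vanish on the ball. On such a `v` the operator `P_{-s}` acts
as multiplication by `-(s(n-1+s) + λ)`, so `v = 0` unless `s` is one of the roots `ŝ_±(λ)`.
Injectivity thus descends by unit steps, and `N` steps down from `σ + N` can only fail when
`ŝ_±(λ) - σ ∈ {0, …, N - 1}`.
-/

open Filter Topology
open scoped ContDiff

section PartialDerivatives

variable {m : ℕ} {j : Fin m} {u v : (Fin m → ℝ) → ℂ} {Y : Fin m → ℝ} {k l : ℕ∞ω}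

theorem pd_congr (h : u =ᶠ[𝓝 Y] v) : pd j u Y = pd j v Y := by
  rw [pd, pd, h.fderiv_eq]

theorem pd_const (c : ℂ) : pd j (fun _ => c) Y = 0 := by
  simp [pd]

theorem pd_eq_zero_of_eventuallyEq_zero (h : u =ᶠ[𝓝 Y] fun _ => 0) : pd j u Y = 0 :=
  (pd_congr h).trans (pd_const 0)

theorem pd_add (hu : DifferentiableAt ℝ u Y) (hv : DifferentiableAt ℝ v Y) :
    pd j (fun Z => u Z + v Z) Y = pd j u Y + pd j v Y := by
  simp [pd, fderiv_fun_add hu hv]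

theorem pd_sub (hu : DifferentiableAt ℝ u Y) (hv : DifferentiableAt ℝ v Y) :
    pd j (fun Z => u Z - v Z) Y = pd j u Y - pd j v Y := by
  simp [pd, fderiv_fun_sub hu hv]

theorem pd_mul (hu : DifferentiableAt ℝ u Y) (hv : DifferentiableAt ℝ v Y) :
    pd j (fun Z => u Z * v Z) Y = pd j u Y * v Y + u Y * pd j v Y := by
  simp [pd, fderiv_fun_mul hu hv, mul_comm, add_comm]

theorem pd_const_mul (c : ℂ) (hu : DifferentiableAt ℝ u Y) :
    pd j (fun Z => c * u Z) Y = c * pd j u Y := by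
  simp [pd, fderiv_const_mul hu]

theorem pd_sum {ι : Type*} {s : Finset ι} {f : ι → (Fin m → ℝ) → ℂ}
    (hf : ∀ i ∈ s, DifferentiableAt ℝ (f i) Y) :
    pd j (fun Z => ∑ i ∈ s, f i Z) Y = ∑ i ∈ s, pd j (f i) Y := by
  simp [pd, fderiv_fun_sum hf]

theorem pd_comp {φ : ℂ → ℂ} {φ' : ℂ} (hφ : HasDerivAt φ φ' (u Y))
    (hu : DifferentiableAt ℝ u Y) : pd j (fun Z => φ (u Z)) Y = φ' * pd j u Y := by
  have h : HasFDerivAt (fun Z => φ (u Z)) (φ' • fderiv ℝ u Y) Y :=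
    hφ.comp_hasFDerivAt Y hu.hasFDerivAt
  simp [pd, h.fderiv]

theorem contDiff_coord (i : Fin m) : ContDiff ℝ k (fun Z : Fin m → ℝ => (Z i : ℂ)) :=
  Complex.ofRealCLM.contDiff.comp (contDiff_apply ℝ ℝ i)

theorem differentiableAt_coord (i : Fin m) :
    DifferentiableAt ℝ (fun Z : Fin m → ℝ => (Z i : ℂ)) Y :=
  (contDiff_coord (k := 1) i).differentiable one_ne_zero Y

theorem pd_coord (i : Fin m) :
    pd j (fun Z : Fin m → ℝ => (Z i : ℂ)) Y = if i = j then 1 else 0 := by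
  have h : HasFDerivAt (fun Z : Fin m → ℝ => (Z i : ℂ))
      (Complex.ofRealCLM.comp (ContinuousLinearMap.proj (R := ℝ) (φ := fun _ => ℝ) i)) Y :=
    (Complex.ofRealCLM.comp (ContinuousLinearMap.proj (R := ℝ) (φ := fun _ => ℝ) i)).hasFDerivAt
  rw [pd, h.fderiv]
  simp [Pi.single_apply, apply_ite]

theorem contDiffAt_pd (hu : ContDiffAt ℝ l u Y) (hkl : k + 1 ≤ l) (j : Fin m) :
    ContDiffAt ℝ k (pd j u) Y :=
  (hu.fderiv_right hkl).clm_apply contDiffAt_const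

theorem differentiableAt_pd (hu : ContDiffAt ℝ 2 u Y) (j : Fin m) :
    DifferentiableAt ℝ (pd j u) Y :=
  (contDiffAt_pd (k := 1) hu (by norm_num) j).differentiableAt one_ne_zero

theorem pd_pd (hu : ContDiffAt ℝ 2 u Y) (i j : Fin m) :
    pd i (pd j u) Y = fderiv ℝ (fderiv ℝ u) Y (Pi.single i 1) (Pi.single j 1) := by
  have hdu : DifferentiableAt ℝ (fderiv ℝ u) Y :=
    (hu.fderiv_right (m := 1) (by norm_num)).differentiableAt one_ne_zero
  change fderiv ℝ (fun Z => fderiv ℝ u Z (Pi.single j 1)) Y (Pi.single i 1) = _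
  simp [fderiv_clm_apply hdu (differentiableAt_const _)]

theorem pd_comm (hu : ContDiffAt ℝ 2 u Y) (i j : Fin m) :
    pd i (pd j u) Y = pd j (pd i u) Y := by
  rw [pd_pd hu, pd_pd hu]
  exact hu.isSymmSndFDerivAt (by simp) _ _

theorem eventually_differentiableAt (hu : ContDiffAt ℝ 1 u Y) :
    ∀ᶠ Z in 𝓝 Y, DifferentiableAt ℝ u Z :=
  (hu.eventually (by simp)).mono fun _ h => h.differentiableAt one_ne_zero

theorem pd_pd_mul (hu : ContDiffAt ℝ 2 u Y) (hv : ContDiffAt ℝ 2 v Y) :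
    pd j (pd j fun Z => u Z * v Z) Y =
      pd j (pd j u) Y * v Y + 2 * (pd j u Y * pd j v Y) + u Y * pd j (pd j v) Y := by
  have hu₁ := hu.differentiableAt two_ne_zero
  have hv₁ := hv.differentiableAt two_ne_zero
  have leibniz : pd j (fun Z => u Z * v Z) =ᶠ[𝓝 Y]
      fun Z => pd j u Z * v Z + u Z * pd j v Z := by
    filter_upwards [eventually_differentiableAt (hu.of_le one_le_two),
      eventually_differentiableAt (hv.of_le one_le_two)] with Z hZu hZv using pd_mul hZu hZv
  rw [pd_congr leibniz, pd_add ((differentiableAt_pd hu j).fun_mul hv₁)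
      (hu₁.fun_mul (differentiableAt_pd hv j)),
    pd_mul (differentiableAt_pd hu j) hv₁, pd_mul hu₁ (differentiableAt_pd hv j)]
  ring

end PartialDerivatives

section EulerLaplace

variable {m : ℕ} {j : Fin m} {u v : (Fin m → ℝ) → ℂ} {Y : Fin m → ℝ} {k l : ℕ∞ω}

theorem euler_congr (h : u =ᶠ[𝓝 Y] v) : euler u Y = euler v Y := by
  simp only [euler, pd_congr h]

theorem euler_add (hu : DifferentiableAt ℝ u Y) (hv : DifferentiableAt ℝ v Y) :
    euler (fun Z => u Z + v Z) Y = euler u Y + euler v Y := by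
  simp only [euler, pd_add hu hv, mul_add, Finset.sum_add_distrib]

theorem euler_sub (hu : DifferentiableAt ℝ u Y) (hv : DifferentiableAt ℝ v Y) :
    euler (fun Z => u Z - v Z) Y = euler u Y - euler v Y := by
  simp only [euler, pd_sub hu hv, mul_sub, Finset.sum_sub_distrib]

theorem euler_const_mul (c : ℂ) (hu : DifferentiableAt ℝ u Y) :
    euler (fun Z => c * u Z) Y = c * euler u Y := by
  simp only [euler, pd_const_mul c hu, Finset.mul_sum, mul_left_comm]

theorem euler_mul (hu : DifferentiableAt ℝ u Y) (hv : DifferentiableAt ℝ v Y) :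
    euler (fun Z => u Z * v Z) Y = euler u Y * v Y + u Y * euler v Y := by
  simp only [euler, pd_mul hu hv, mul_add, Finset.sum_add_distrib, Finset.sum_mul,
    Finset.mul_sum, mul_assoc, mul_left_comm]

theorem contDiffAt_euler (hu : ContDiffAt ℝ l u Y) (hkl : k + 1 ≤ l) :
    ContDiffAt ℝ k (euler u) Y :=
  ContDiffAt.sum fun j _ => (contDiff_coord j).contDiffAt.mul (contDiffAt_pd hu hkl j)

theorem differentiableAt_euler (hu : ContDiffAt ℝ 2 u Y) : DifferentiableAt ℝ (euler u) Y :=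
  (contDiffAt_euler (k := 1) hu (by norm_num)).differentiableAt one_ne_zero

theorem contDiffAt_lap (hu : ContDiffAt ℝ l u Y) (hkl : k + 1 + 1 ≤ l) :
    ContDiffAt ℝ k (lap u) Y :=
  ContDiffAt.sum fun j _ => contDiffAt_pd (contDiffAt_pd hu hkl j) le_rfl j

theorem euler_euler_mul (hu : ContDiffAt ℝ 2 u Y) (hv : ContDiffAt ℝ 2 v Y) :
    euler (euler fun Z => u Z * v Z) Y =
      euler (euler u) Y * v Y + 2 * (euler u Y * euler v Y) + u Y * euler (euler v) Y := by
  have hu₁ := hu.differentiableAt two_ne_zero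
  have hv₁ := hv.differentiableAt two_ne_zero
  have leibniz : euler (fun Z => u Z * v Z) =ᶠ[𝓝 Y]
      fun Z => euler u Z * v Z + u Z * euler v Z := by
    filter_upwards [eventually_differentiableAt (hu.of_le one_le_two),
      eventually_differentiableAt (hv.of_le one_le_two)] with Z hZu hZv using euler_mul hZu hZv
  rw [euler_congr leibniz, euler_add ((differentiableAt_euler hu).fun_mul hv₁)
      (hu₁.fun_mul (differentiableAt_euler hv)),
    euler_mul (differentiableAt_euler hu) hv₁, euler_mul hu₁ (differentiableAt_euler hv)]
  ring

theorem lap_mul (hu : ContDiffAt ℝ 2 u Y) (hv : ContDiffAt ℝ 2 v Y) :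
    lap (fun Z => u Z * v Z) Y =
      lap u Y * v Y + 2 * ∑ j, pd j u Y * pd j v Y + u Y * lap v Y := by
  simp only [lap, pd_pd_mul hu hv, Finset.sum_add_distrib, Finset.sum_mul, Finset.mul_sum]

theorem pd_euler (hu : ContDiffAt ℝ 2 u Y) :
    pd j (euler u) Y = euler (pd j u) Y + pd j u Y := by
  have hterm (i : Fin m) : pd j (fun Z => (Z i : ℂ) * pd i u Z) Y =
      (if i = j then pd i u Y else 0) + Y i * pd i (pd j u) Y := by
    rw [pd_mul (differentiableAt_coord i) (differentiableAt_pd hu i), pd_coord, pd_comm hu j i]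
    simp
  change pd j (fun Z => ∑ i, (Z i : ℂ) * pd i u Z) Y = _
  rw [pd_sum fun i _ => (differentiableAt_coord i).fun_mul (differentiableAt_pd hu i)]
  simp only [hterm, Finset.sum_add_distrib, Finset.sum_ite_eq', Finset.mem_univ, if_true]
  exact add_comm _ _

theorem pd_euler_sub_const_mul (c : ℂ) (hu : ContDiffAt ℝ 2 u Y) :
    pd j (fun Z => euler u Z - c * u Z) Y = euler (pd j u) Y - (c - 1) * pd j u Y := by
  have hu₁ := hu.differentiableAt two_ne_zero
  rw [pd_sub (differentiableAt_euler hu) (hu₁.const_mul c), pd_euler hu, pd_const_mul c hu₁]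
  ring

theorem pd_lap (hu : ContDiffAt ℝ 3 u Y) : pd j (lap u) Y = lap (pd j u) Y := by
  have hpd (i : Fin m) : ContDiffAt ℝ 2 (pd i u) Y := contDiffAt_pd hu (by norm_num) i
  have hcomm (i : Fin m) : pd j (pd i u) =ᶠ[𝓝 Y] pd i (pd j u) :=
    ((hu.of_le (by norm_num) : ContDiffAt ℝ 2 u Y).eventually (by simp)).mono
      fun Z hZ => pd_comm hZ j i
  change pd j (fun Z => ∑ i, pd i (pd i u) Z) Y = ∑ i, pd i (pd i (pd j u)) Y
  rw [pd_sum fun i _ => differentiableAt_pd (hpd i) i]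
  exact Finset.sum_congr rfl fun i _ => (pd_comm (hpd i) j i).trans (pd_congr (hcomm i))

end EulerLaplace

section NormalOperator

variable {n : ℕ} {lam s : ℂ} {u v : (Fin (n - 1) → ℝ) → ℂ} {Y : Fin (n - 1) → ℝ}

theorem Pop_eq (hu : ContDiffAt ℝ 2 u Y) :
    Pop n lam s u Y = lap u Y - euler (euler u) Y - ((n : ℂ) - 1 - 2 * s) * euler u Y
      + (s * ((n : ℂ) - 1 - s) - lam) * u Y := by
  have hu₁ := hu.differentiableAt two_ne_zero
  rw [Pop, euler_sub (differentiableAt_euler hu) (hu₁.const_mul s), euler_const_mul s hu₁]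
  ring

theorem Pop_mul (hu : ContDiffAt ℝ 2 u Y) (hv : ContDiffAt ℝ 2 v Y) :
    Pop n lam s (fun Z => u Z * v Z) Y =
      Pop n lam s u Y * v Y + 2 * (∑ j, pd j u Y * pd j v Y - euler u Y * euler v Y)
        + u Y * (lap v Y - euler (euler v) Y - ((n : ℂ) - 1 - 2 * s) * euler v Y) := by
  rw [Pop_eq (hu.mul hv), Pop_eq hu, lap_mul hu hv, euler_euler_mul hu hv,
    euler_mul (hu.differentiableAt two_ne_zero) (hv.differentiableAt two_ne_zero)]
  ring

theorem pd_Pop (hu : ContDiffAt ℝ 3 u Y) (j : Fin (n - 1)) :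
    pd j (Pop n lam s u) Y = Pop n lam (s - 1) (pd j u) Y := by
  have hu₂ : ContDiffAt ℝ 2 u Y := hu.of_le (by norm_num)
  have hu₁ := hu₂.differentiableAt two_ne_zero
  set f : (Fin (n - 1) → ℝ) → ℂ := fun Z => euler u Z - s * u Z
  have hf : ContDiffAt ℝ 2 f Y :=
    (contDiffAt_euler hu (by norm_num)).sub (contDiffAt_const.mul hu₂)
  have hpdf : pd j f =ᶠ[𝓝 Y] fun Z => euler (pd j u) Z - (s - 1) * pd j u Z :=
    (hu₂.eventually (by simp)).mono fun Z hZ => pd_euler_sub_const_mul s hZ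
  have hfactor : DifferentiableAt ℝ (fun Z => euler f Z - (s - (n - 1)) * f Z) Y :=
    (differentiableAt_euler hf).fun_sub ((hf.differentiableAt two_ne_zero).const_mul _)
  have hlap : DifferentiableAt ℝ (lap u) Y :=
    (contDiffAt_lap (k := 1) hu (by norm_num)).differentiableAt one_ne_zero
  have hPop : Pop n lam s u =
      fun Z => lap u Z - (euler f Z - (s - (n - 1)) * f Z) - lam * u Z := by
    ext Z
    simp only [Pop, f]
    ring
  rw [hPop, pd_sub (hlap.fun_sub hfactor) (hu₁.const_mul lam), pd_sub hlap hfactor,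
    pd_lap hu, pd_euler_sub_const_mul _ hf, pd_const_mul lam hu₁, euler_congr hpdf,
    hpdf.eq_of_nhds, Pop]
  ring

theorem Pop_eq_of_eventually_pd_eq_zero (hu : ContDiffAt ℝ 2 u Y)
    (hpd : ∀ᶠ Z in 𝓝 Y, ∀ j, pd j u Z = 0) :
    Pop n lam s u Y = (s * ((n : ℂ) - 1 - s) - lam) * u Y := by
  have heuler : euler u =ᶠ[𝓝 Y] fun _ => 0 := by
    filter_upwards [hpd] with Z hZ
    simp [euler, hZ]
  have heuler_euler : euler (euler u) Y = 0 := by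
    rw [euler_congr heuler]
    simp [euler, pd_const]
  have hlap : lap u Y = 0 :=
    Finset.sum_eq_zero fun j _ => pd_eq_zero_of_eventuallyEq_zero (hpd.mono fun _ hZ => hZ j)
  rw [Pop_eq hu, heuler_euler, hlap, heuler.eq_of_nhds]
  ring

end NormalOperator

/-- The Euclidean open unit ball of `ℝ^m`; it is not `Metric.ball 0 1`, because `Fin m → ℝ`
carries the sup norm. -/
def euclideanUnitBall (m : ℕ) : Set (Fin m → ℝ) :=
  {Y | ∑ j, (Y j) ^ 2 < 1}

/-- The weight `ν^{2s} = (1 - |Z|²)^s`, meaningful on the Euclidean unit ball. -/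
noncomputable def ballWeight {m : ℕ} (s : ℂ) (Z : Fin m → ℝ) : ℂ :=
  ((1 - ∑ j, (Z j) ^ 2 : ℝ) : ℂ) ^ s

/-- The injectivity condition at `s` of the family `P`: the only solution of `P_s u = 0` on the
unit ball with `u = ν^{2s} w`, `w` globally smooth, is `u = 0`. -/
def InjectiveOnWeighted (n : ℕ) (lam s : ℂ) : Prop :=
  ∀ w : (Fin (n - 1) → ℝ) → ℂ, ContDiff ℝ ∞ w →
    (∀ Y ∈ euclideanUnitBall (n - 1), Pop n lam s (fun Z => ballWeight s Z * w Z) Y = 0) →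
    ∀ Y ∈ euclideanUnitBall (n - 1), w Y = 0

section BallWeight

variable {m : ℕ} {Y : Fin m → ℝ}

theorem isOpen_euclideanUnitBall : IsOpen (euclideanUnitBall m) :=
  isOpen_lt (by fun_prop) continuous_const

theorem one_sub_sum_sq_mem_slitPlane (hY : Y ∈ euclideanUnitBall m) :
    ((1 - ∑ j, (Y j) ^ 2 : ℝ) : ℂ) ∈ Complex.slitPlane :=
  Complex.ofReal_mem_slitPlane.2 (sub_pos.2 hY)

theorem ballWeight_ne_zero (s : ℂ) (hY : Y ∈ euclideanUnitBall m) : ballWeight s Y ≠ 0 :=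
  fun h => Complex.slitPlane_ne_zero (one_sub_sum_sq_mem_slitPlane hY)
    ((Complex.cpow_eq_zero_iff _ _).1 h).1

theorem sum_sq_mul_ballWeight_sub_one (s : ℂ) (hY : Y ∈ euclideanUnitBall m) :
    (∑ j, (Y j : ℂ) ^ 2) * ballWeight (s - 1) Y = ballWeight (s - 1) Y - ballWeight s Y := by
  have hne := Complex.slitPlane_ne_zero (one_sub_sum_sq_mem_slitPlane hY)
  have hstep : ballWeight s Y = (1 - ∑ j, (Y j : ℂ) ^ 2) * ballWeight (s - 1) Y := by
    have hbase : 1 - ∑ j, (Y j : ℂ) ^ 2 = ((1 - ∑ j, (Y j) ^ 2 : ℝ) : ℂ) := by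
      push_cast
      rfl
    rw [hbase, ballWeight, ballWeight, Complex.cpow_sub _ _ hne, Complex.cpow_one,
      mul_div_cancel₀ _ hne]
  rw [hstep]
  ring

theorem contDiff_one_sub_sum_sq {k : ℕ∞ω} :
    ContDiff ℝ k fun Z : Fin m → ℝ => ((1 - ∑ j, (Z j) ^ 2 : ℝ) : ℂ) :=
  Complex.ofRealCLM.contDiff.comp
    (contDiff_const.sub (ContDiff.sum fun j _ => (contDiff_apply ℝ ℝ j).pow 2))

theorem pd_one_sub_sum_sq (j : Fin m) :
    pd j (fun Z => ((1 - ∑ i, (Z i) ^ 2 : ℝ) : ℂ)) Y = -2 * Y j := by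
  have hcoord (i : Fin m) := differentiableAt_coord (Y := Y) i
  have hsq (i : Fin m) : DifferentiableAt ℝ (fun Z => (Z i : ℂ) * (Z i : ℂ)) Y :=
    (hcoord i).fun_mul (hcoord i)
  simp only [Complex.ofReal_sub, Complex.ofReal_one, Complex.ofReal_sum, sq, Complex.ofReal_mul]
  rw [pd_sub (differentiableAt_const 1) (DifferentiableAt.fun_sum fun i _ => hsq i), pd_const,
    pd_sum fun i _ => hsq i]
  simp only [pd_mul (hcoord _) (hcoord _), pd_coord]
  simp only [ite_mul, mul_ite, one_mul, mul_one, zero_mul, mul_zero, Finset.sum_add_distrib,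
    Finset.sum_ite_eq', Finset.mem_univ, if_true]
  ring

theorem contDiffAt_ballWeight {k : ℕ∞ω} (s : ℂ) (hY : Y ∈ euclideanUnitBall m) :
    ContDiffAt ℝ k (ballWeight s) Y :=
  have hpow : ContDiffAt ℂ k (fun z : ℂ => z ^ s) ((1 - ∑ j, (Y j) ^ 2 : ℝ) : ℂ) :=
    (analyticAt_id.cpow analyticAt_const (one_sub_sum_sq_mem_slitPlane hY)).contDiffAt
  (hpow.restrict_scalars ℝ).comp Y contDiff_one_sub_sum_sq.contDiffAt

theorem differentiableAt_ballWeight (s : ℂ) (hY : Y ∈ euclideanUnitBall m) :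
    DifferentiableAt ℝ (ballWeight s) Y :=
  (contDiffAt_ballWeight (k := 1) s hY).differentiableAt one_ne_zero

theorem pd_ballWeight (s : ℂ) (hY : Y ∈ euclideanUnitBall m) (j : Fin m) :
    pd j (ballWeight s) Y = -2 * s * (Y j * ballWeight (s - 1) Y) := by
  have hpow : HasDerivAt (fun z : ℂ => z ^ s) (s * ballWeight (s - 1) Y)
      ((1 - ∑ j, (Y j) ^ 2 : ℝ) : ℂ) := by
    simpa only [mul_one] using!
      (hasDerivAt_id _).cpow_const (c := s) (one_sub_sum_sq_mem_slitPlane hY)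
  have hbase := (contDiff_one_sub_sum_sq (m := m) (k := 1)).differentiable one_ne_zero Y
  refine (pd_comp hpow hbase).trans ?_
  rw [pd_one_sub_sum_sq]
  ring

theorem euler_ballWeight (s : ℂ) (hY : Y ∈ euclideanUnitBall m) :
    euler (ballWeight s) Y = 2 * s * (ballWeight s Y - ballWeight (s - 1) Y) := by
  have hsum : euler (ballWeight s) Y =
      -2 * s * ((∑ j, (Y j : ℂ) ^ 2) * ballWeight (s - 1) Y) := by
    simp only [euler, pd_ballWeight s hY, Finset.sum_mul, Finset.mul_sum]
    exact Finset.sum_congr rfl fun _ _ => by ring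
  rw [hsum, sum_sq_mul_ballWeight_sub_one s hY]
  ring

theorem euler_euler_ballWeight (s : ℂ) (hY : Y ∈ euclideanUnitBall m) :
    euler (euler (ballWeight s)) Y =
      2 * s * (euler (ballWeight s) Y - euler (ballWeight (s - 1)) Y) := by
  have heuler : euler (ballWeight s) =ᶠ[𝓝 Y]
      fun Z => 2 * s * (ballWeight s Z - ballWeight (s - 1) Z) := by
    filter_upwards [isOpen_euclideanUnitBall.mem_nhds hY] with Z hZ using euler_ballWeight s hZ
  have hs := differentiableAt_ballWeight s hY
  have hs₁ := differentiableAt_ballWeight (s - 1) hY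
  rw [euler_congr heuler, euler_const_mul _ (hs.fun_sub hs₁), euler_sub hs hs₁]

theorem lap_ballWeight (s : ℂ) (hY : Y ∈ euclideanUnitBall m) :
    lap (ballWeight s) Y = -2 * s * (m * ballWeight (s - 1) Y + euler (ballWeight (s - 1)) Y) := by
  have hs₁ := differentiableAt_ballWeight (s - 1) hY
  have hpd (j : Fin m) : pd j (pd j (ballWeight s)) Y =
      -2 * s * (ballWeight (s - 1) Y + Y j * pd j (ballWeight (s - 1)) Y) := by
    have hfirst : pd j (ballWeight s) =ᶠ[𝓝 Y]
        fun Z => -2 * s * (Z j * ballWeight (s - 1) Z) := by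
      filter_upwards [isOpen_euclideanUnitBall.mem_nhds hY] with Z hZ using pd_ballWeight s hZ j
    rw [pd_congr hfirst, pd_const_mul _ ((differentiableAt_coord j).fun_mul hs₁),
      pd_mul (differentiableAt_coord j) hs₁, pd_coord, if_pos rfl, one_mul]
  simp [lap, hpd, euler, ← Finset.mul_sum, Finset.sum_add_distrib]

theorem sum_pd_ballWeight_mul_pd (s : ℂ) (v : (Fin m → ℝ) → ℂ) (hY : Y ∈ euclideanUnitBall m) :
    ∑ j, pd j (ballWeight s) Y * pd j v Y = -2 * s * ballWeight (s - 1) Y * euler v Y := by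
  simp only [pd_ballWeight s hY, euler, Finset.mul_sum]
  exact Finset.sum_congr rfl fun _ _ => by ring

end BallWeight

section Conjugation

variable {n : ℕ} {lam s : ℂ} {Y : Fin (n - 1) → ℝ}

theorem Pop_ballWeight (hn : 1 ≤ n) (hY : Y ∈ euclideanUnitBall (n - 1)) :
    Pop n lam s (ballWeight s) Y = -(s * ((n : ℂ) - 1 + s) + lam) * ballWeight s Y := by
  rw [Pop_eq (contDiffAt_ballWeight s hY), lap_ballWeight s hY, euler_euler_ballWeight s hY,
    euler_ballWeight s hY, Nat.cast_sub hn, Nat.cast_one]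
  ring

theorem Pop_ballWeight_mul (hn : 1 ≤ n) {v : (Fin (n - 1) → ℝ) → ℂ} (hv : ContDiffAt ℝ 2 v Y)
    (hY : Y ∈ euclideanUnitBall (n - 1)) :
    Pop n lam s (fun Z => ballWeight s Z * v Z) Y = ballWeight s Y * Pop n lam (-s) v Y := by
  rw [Pop_mul (contDiffAt_ballWeight s hY) hv, Pop_ballWeight hn hY,
    sum_pd_ballWeight_mul_pd s v hY, euler_ballWeight s hY, Pop_eq hv]
  ring

end Conjugation

section Injectivity

variable {n : ℕ} {lam s : ℂ}

theorem injectiveOnWeighted_iff (hn : 1 ≤ n) :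
    InjectiveOnWeighted n lam s ↔
      ∀ w : (Fin (n - 1) → ℝ) → ℂ, ContDiff ℝ ∞ w →
        (∀ Y ∈ euclideanUnitBall (n - 1), Pop n lam (-s) w Y = 0) →
        ∀ Y ∈ euclideanUnitBall (n - 1), w Y = 0 := by
  refine forall₂_congr fun w hw => imp_congr_left (forall₂_congr fun Y hY => ?_)
  have hw₂ : ContDiffAt ℝ 2 w Y := (contDiff_infty.1 hw 2).contDiffAt
  rw [Pop_ballWeight_mul hn hw₂ hY, mul_eq_zero, or_iff_right (ballWeight_ne_zero s hY)]

theorem InjectiveOnWeighted.of_add_one (hn : 1 ≤ n)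
    (hinj : InjectiveOnWeighted n lam (s + 1)) (hs : s * ((n : ℂ) - 1 + s) + lam ≠ 0) :
    InjectiveOnWeighted n lam s := by
  rw [injectiveOnWeighted_iff hn] at hinj ⊢
  intro v hv hPv Y hY
  have hv₃ (Z) : ContDiffAt ℝ 3 v Z := (contDiff_infty.1 hv 3).contDiffAt
  have hpd (j : Fin (n - 1)) : ∀ Z ∈ euclideanUnitBall (n - 1), pd j v Z = 0 := by
    have hpd_smooth : ContDiff ℝ ∞ (pd j v) :=
      contDiff_iff_contDiffAt.2 fun _ => contDiffAt_pd hv.contDiffAt (by simp) j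
    refine hinj _ hpd_smooth fun Z hZ => ?_
    rw [neg_add', ← pd_Pop (hv₃ Z)]
    exact pd_eq_zero_of_eventuallyEq_zero
      (eventually_of_mem (isOpen_euclideanUnitBall.mem_nhds hZ) hPv)
  have hpd_near : ∀ᶠ Z in 𝓝 Y, ∀ j, pd j v Z = 0 :=
    eventually_of_mem (isOpen_euclideanUnitBall.mem_nhds hY) fun Z hZ j => hpd j Z hZ
  have hmul : (s * ((n : ℂ) - 1 + s) + lam) * v Y = 0 := by
    have hPv_eq := Pop_eq_of_eventually_pd_eq_zero (lam := lam) (s := -s)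
      ((hv₃ Y).of_le (by norm_num)) hpd_near
    linear_combination hPv_eq - hPv Y hY
  exact (mul_eq_zero.1 hmul).resolve_left hs

theorem InjectiveOnWeighted.of_add_nat (hn : 1 ≤ n) {N : ℕ}
    (hinj : InjectiveOnWeighted n lam (s + N))
    (hs : ∀ k < N, (s + k) * ((n : ℂ) - 1 + (s + k)) + lam ≠ 0) :
    InjectiveOnWeighted n lam s := by
  induction N with
  | zero => simpa using hinj
  | succ N ih =>
    refine ih (.of_add_one hn ?_ (hs N N.lt_succ_self)) fun k hk => hs k (hk.trans N.lt_succ_self)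
    simpa [add_assoc] using hinj

end Injectivity

theorem eq_or_eq_of_indicial_eq_zero {M lam d s : ℂ} (hd : d ^ 2 = (M / 2) ^ 2 - lam)
    (hs : s * (M + s) + lam = 0) : -M / 2 + d = s ∨ -M / 2 - d = s := by
  have hfactor : (-M / 2 + d - s) * (-M / 2 - d - s) = 0 := by
    linear_combination hs - hd
  simpa [sub_eq_zero] using hfactor

theorem stmt19_general {n N : ℕ} (hn : 1 ≤ n) {lam σ d : ℂ}
    (hd : d ^ 2 = (((n : ℂ) - 1) / 2) ^ 2 - lam)
    (hinj : InjectiveOnWeighted n lam (σ + N)) :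
    InjectiveOnWeighted n lam σ
      ∨ (∃ k < N, (-((n : ℂ) - 1) / 2 + d) - σ = k)
      ∨ (∃ k < N, (-((n : ℂ) - 1) / 2 - d) - σ = k) := by
  by_cases hroot : ∀ k < N, (σ + k) * ((n : ℂ) - 1 + (σ + k)) + lam ≠ 0
  · exact .inl (hinj.of_add_nat hn hroot)
  · push Not at hroot
    obtain ⟨k, hkN, hk⟩ := hroot
    refine .inr ((eq_or_eq_of_indicial_eq_zero hd hk).imp ?_ ?_) <;>
      exact fun h => ⟨k, hkN, sub_eq_iff_eq_add'.2 h⟩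

/-- suppose that for every globally smooth `w : ℝ^{n−1} → ℂ`,
`P_{σ+2}((1−|Y|²)^{σ+2} w) = 0` on the open unit ball `B` forces `w = 0` on `B`.
Then for every globally smooth `v : ℝ^{n−1} → ℂ` with `P_σ((1−|Y|²)^σ v) = 0` on `B`,
either `v` vanishes on `B`, or `ŝ₊(λ) − σ ∈ ℕ`, or `ŝ₋(λ) − σ ∈ ℕ`, where
`ŝ_±(λ) = −(n−1)/2 ± d`, `d² = ((n−1)/2)² − λ`. -/
theorem stmt19 (n : ℕ) (hn : 2 ≤ n) (lam σ d : ℂ)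
    (hd : d ^ 2 = (((n : ℂ) - 1) / 2) ^ 2 - lam)
    (hinj : ∀ w : (Fin (n - 1) → ℝ) → ℂ, ContDiff ℝ (⊤ : ℕ∞) w →
      (∀ Y ∈ {Y : Fin (n - 1) → ℝ | ∑ j, (Y j) ^ 2 < 1},
        Pop n lam (σ + 2)
          (fun Z => (((1 - ∑ j, (Z j) ^ 2 : ℝ)) : ℂ) ^ (σ + 2) * w Z) Y = 0) →
      ∀ Y ∈ {Y : Fin (n - 1) → ℝ | ∑ j, (Y j) ^ 2 < 1}, w Y = 0) :
    ∀ v : (Fin (n - 1) → ℝ) → ℂ, ContDiff ℝ (⊤ : ℕ∞) v →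
      (∀ Y ∈ {Y : Fin (n - 1) → ℝ | ∑ j, (Y j) ^ 2 < 1},
        Pop n lam σ
          (fun Z => (((1 - ∑ j, (Z j) ^ 2 : ℝ)) : ℂ) ^ σ * v Z) Y = 0) →
      (∀ Y ∈ {Y : Fin (n - 1) → ℝ | ∑ j, (Y j) ^ 2 < 1}, v Y = 0)
        ∨ (∃ k : ℕ, (-((n : ℂ) - 1) / 2 + d) - σ = (k : ℂ))
        ∨ (∃ k : ℕ, (-((n : ℂ) - 1) / 2 - d) - σ = (k : ℂ)) := by
  intro v hv hPv
  obtain hσ | ⟨k, -, hk⟩ | ⟨k, -, hk⟩ := stmt19_general (N := 2) (by omega) hd hinj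
  · exact .inl (hσ v hv hPv)
  · exact .inr (.inl ⟨k, hk⟩)
  · exact .inr (.inr ⟨k, hk⟩)
end
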